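/- arXiv:1501.07724 — 2 statements merged into one kernel-verified Lean document; each statement's English description precedes it below -/
import Mathlib

section
/- For every odd prime p and every integer n ≥ 3 there exists a smooth action of ℤ/p by diffeomorphisms on the standard smooth sphere S^{n+2} whose fixed point set is non-empty and path-connected and such that TC^{ℤ/p}(S^{n+2}) ≥ 4. (The fixed point set is a smooth homology n-sphere whose fundamental group is neither trivial nor free, so its Lusternik–Schnirelmann category, and hence its topological complexity, is at least 4.) -/
open Set unitInterval

namespace PaperTC

variable {G X : Type*}

/-- The orbit of `x` under the action `act`. -/
def orbit (act : G → X → X) (x : X) : Set X := {y | ∃ g, act g x = y}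

/-- The fixed point set of the action `act`. -/
def fixedSet (act : G → X → X) : Set X := {x | ∀ g, act g x = x}

/-- The fixed point set of a subset `S` of the acting group. -/
def fixedSetOf (act : G → X → X) (S : Set G) : Set X := {x | ∀ g ∈ S, act g x = x}

/-- `minCover P` is the least `k ≥ 1` satisfying `P k`, as an element of `ℕ∞`
(equal to `∞` if there is no such `k`). -/
noncomputable def minCover (P : ℕ → Prop) : ℕ∞ :=
  sInf {k : ℕ∞ | ∃ m : ℕ, k = m ∧ 1 ≤ m ∧ P m}

section Plain

variable (Y : Type*) [TopologicalSpace Y]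

/-- `Y × Y` can be covered by `k` open sets each admitting a motion planner. -/
def TCcover (k : ℕ) : Prop :=
  ∃ U : Fin k → Set (Y × Y),
    (∀ i, IsOpen (U i)) ∧ (⋃ i, U i) = univ ∧
    ∀ i, ∃ s : Y × Y → C(I, Y),
      ContinuousOn s (U i) ∧ ∀ p ∈ U i, s p 0 = p.1 ∧ s p 1 = p.2

/-- Topological complexity (non-reduced, possibly infinite). -/
noncomputable def TC : ℕ∞ := minCover (TCcover Y)

/-- `Y` can be covered by `k` open sets, each of which can be deformed within `Y`
to a point. -/
def catCover (k : ℕ) : Prop :=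
  ∃ U : Fin k → Set Y,
    (∀ i, IsOpen (U i)) ∧ (⋃ i, U i) = univ ∧
    ∀ i, ∃ H : Y × I → Y,
      ContinuousOn H (U i ×ˢ (univ : Set I)) ∧ (∀ x ∈ U i, H (x, 0) = x) ∧
      ∃ y₀, ∀ x ∈ U i, H (x, 1) = y₀

/-- Non-reduced Lusternik–Schnirelmann category. -/
noncomputable def cat : ℕ∞ := minCover (catCover Y)

end Plain

section Equivariant

variable [TopologicalSpace X] (act : G → X → X)

/-- `X × X` can be covered by `k` invariant open sets each admitting an
equivariant motion planner. -/
def eqTCcover (k : ℕ) : Prop :=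
  ∃ U : Fin k → Set (X × X),
    (∀ i, IsOpen (U i)) ∧ (⋃ i, U i) = univ ∧
    ∀ i, (∀ g p, p ∈ U i → (act g p.1, act g p.2) ∈ U i) ∧
      ∃ s : X × X → C(I, X),
        ContinuousOn s (U i) ∧
        (∀ p ∈ U i, s p 0 = p.1 ∧ s p 1 = p.2) ∧
        (∀ g p, p ∈ U i → ∀ t : I, s (act g p.1, act g p.2) t = act g (s p t))

/-- Equivariant topological complexity `TC_G` of Colman and Grant. -/
noncomputable def eqTC : ℕ∞ := minCover (eqTCcover act)

/-- `X × X` can be covered by `k` `(G × G)`-invariant open sets, each admitting a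
`(G × G)`-equivariant section of `π^G : P X ×_{X/G} P X → X × X`; such a section is
recorded by a pair of paths `s₁ p`, `s₂ p`, with the orbit of the endpoint of the first
equal to the orbit of the starting point of the second. -/
def invTCcover (k : ℕ) : Prop :=
  ∃ U : Fin k → Set (X × X),
    (∀ i, IsOpen (U i)) ∧ (⋃ i, U i) = univ ∧
    ∀ i, (∀ g₁ g₂ : G, ∀ p, p ∈ U i → (act g₁ p.1, act g₂ p.2) ∈ U i) ∧
      ∃ s₁ s₂ : X × X → C(I, X),
        ContinuousOn s₁ (U i) ∧ ContinuousOn s₂ (U i) ∧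
        (∀ p ∈ U i, s₁ p 0 = p.1 ∧ s₂ p 1 = p.2 ∧
          orbit act (s₁ p 1) = orbit act (s₂ p 0)) ∧
        (∀ g₁ g₂ : G, ∀ p, p ∈ U i → ∀ t : I,
          s₁ (act g₁ p.1, act g₂ p.2) t = act g₁ (s₁ p t) ∧
          s₂ (act g₁ p.1, act g₂ p.2) t = act g₂ (s₂ p t))

/-- Invariant topological complexity `TC^G` of Lubawski and Marzantowicz. -/
noncomputable def invTC : ℕ∞ := minCover (invTCcover act)

/-- The invariant open set `U` is `G`-compressible into `A`: the inclusion `U ↪ X` is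
`G`-equivariantly homotopic to a `G`-map with values in `A`. -/
def GCompressible (A : Set X) (U : Set X) : Prop :=
  (∀ g x, x ∈ U → act g x ∈ U) ∧
  ∃ H : X × I → X,
    ContinuousOn H (U ×ˢ (univ : Set I)) ∧ (∀ x ∈ U, H (x, 0) = x) ∧
    (∀ g x, x ∈ U → ∀ t : I, H (act g x, t) = act g (H (x, t))) ∧
    (∀ x ∈ U, H (x, 1) ∈ A)

/-- A `G`-categorical set: compressible into a single orbit. -/
def GCategorical (U : Set X) : Prop :=
  ∃ x₀ : X, GCompressible act (orbit act x₀) U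

/-- `X` can be covered by `k` open `G`-categorical sets. -/
def catGCover (k : ℕ) : Prop :=
  ∃ U : Fin k → Set X,
    (∀ i, IsOpen (U i)) ∧ (⋃ i, U i) = univ ∧ ∀ i, GCategorical act (U i)

/-- Equivariant Lusternik–Schnirelmann category `cat_G`. -/
noncomputable def catG : ℕ∞ := minCover (catGCover act)

/-- `X` can be covered by `k` open sets `G`-compressible into `{star}`. -/
def pointedCatGCover (star : X) (k : ℕ) : Prop :=
  ∃ U : Fin k → Set X,
    (∀ i, IsOpen (U i)) ∧ (⋃ i, U i) = univ ∧
    ∀ i, GCompressible act {star} (U i)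

/-- The pointed equivariant category `_{{⋆}}cat_G(X)`. -/
noncomputable def pointedCatG (star : X) : ℕ∞ := minCover (pointedCatGCover act star)

/-- `X` is `G`-contractible: the identity is `G`-homotopic to a map with values in a
single orbit. -/
def GContractible : Prop :=
  ∃ H : X × I → X,
    Continuous H ∧ (∀ x, H (x, 0) = x) ∧
    (∀ g x, ∀ t : I, H (act g x, t) = act g (H (x, t))) ∧
    ∃ x₀ : X, ∀ x, H (x, 1) ∈ orbit act x₀

end Equivariant

/-- The orbit space `X/G` with the quotient topology. -/
abbrev OrbitSpace (act : G → X → X) : Type _ := Quot (fun x y => ∃ g, act g x = y)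

end PaperTC
namespace PaperTC

/-- The unit sphere `S^n ⊆ ℝ^{n+1}` (with the Euclidean metric). -/
abbrev Sph (n : ℕ) : Set (EuclideanSpace ℝ (Fin (n + 1))) := Metric.sphere 0 1

/-- The action of `G` on the unit sphere `S^n` obtained by restricting an orthogonal
representation of `G` on `ℝ^{n+1}`. -/
noncomputable def sphereAct {G : Type*} [Monoid G] {n : ℕ}
    (ρ : G →* (EuclideanSpace ℝ (Fin (n + 1)) ≃ₗᵢ[ℝ] EuclideanSpace ℝ (Fin (n + 1)))) :
    G → ↥(Sph n) → ↥(Sph n) := fun g x =>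
  ⟨ρ g x, mem_sphere_zero_iff_norm.mpr (by
    rw [(ρ g).norm_map]; exact mem_sphere_zero_iff_norm.mp x.2)⟩

end PaperTC

open PaperTC Manifold

namespace TCaux
open Finset

abbrev L := Fin 3 × Bool
def ng (x : L) : L := (x.1, !x.2)
def ok (x y : L) : Bool := !decide (x = ng y)

def al0 (x : L) : ZMod 2 := if x.2 then 1 else 0
def b1 (x y : L) : Bool := x.2 && !y.2 && decide (x.1 < y.1)
def al1 (x y : L) : ZMod 2 := if b1 x y || b1 y x then 1 else 0
def b2 (x y z : L) : Bool := x.2 && !y.2 && z.2 && decide (x.1 < y.1) && decide (y.1 < z.1)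
def al2 (x y z : L) : ZMod 2 :=
  if b2 x y z || b2 x z y || b2 y x z || b2 y z x || b2 z x y || b2 z y x then 1 else 0

theorem al0_T : ∀ x : L, al0 x + al0 (ng x) = 1 := by decide
theorem d1 : ∀ x y : L, ok x y → al0 x + al0 y = al1 x y + al1 (ng x) (ng y) := by decide
theorem d2 : ∀ x y z : L, ok x y → ok y z → ok x z →
    al1 x y + al1 y z + al1 x z = al2 x y z + al2 (ng x) (ng y) (ng z) := by decide
set_option maxRecDepth 100000 in
set_option maxHeartbeats 4000000 in
theorem d3 : ∀ x y z w : L, ok x y → ok x z → ok x w → ok y z → ok y w → ok z w →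
    al2 y z w + al2 x z w + al2 x y w + al2 x y z = 0 := by decide
theorem al2_symm : ∀ x y z : L, al2 x y z = al2 z y x := by decide
theorem al2_d1 : ∀ x y : L, al2 x x y = 0 ∧ al2 x y y = 0 ∧ al2 x y x = 0:= by decide
theorem al1_symm : ∀ x y : L, al1 x y = al1 y x := by decide
theorem al1_self : ∀ x : L, al1 x x = 0 := by decide
theorem ng_ng : ∀ x : L, ng (ng x) = x := by decide
end TCaux

namespace TCaux
open Finset

theorem tele (g : ℕ → ZMod 2) (N : ℕ) : ∑ i ∈ range N, (g i + g (i+1)) = g 0 + g N := by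
  induction N with
  | zero => simp [CharTwo.add_self_eq_zero]
  | succ n ih =>
    rw [sum_range_succ, ih]
    have := CharTwo.add_self_eq_zero (g n)
    linear_combination this

def S2 (a b c d : L) : ZMod 2 := al2 a b d + al2 a c d

theorem ok_symm : ∀ x y : L, ok x y → ok y x := by decide
theorem al2_p1 : ∀ a b c : L, al2 c b a = al2 c a b := by decide
theorem al2_p2 : ∀ b c d : L, al2 c d b = al2 b c d := by decide

theorem S2_flip (a b c d : L) (h1 : ok a b) (h2 : ok a c) (h3 : ok a d) (h4 : ok b c) (h5 : ok b d)
    (h6 : ok c d) (h4' : ok c b) : S2 a b c d = S2 c d a b := by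
  have e1 := d3 a b c d h1 h2 h3 h4 h5 h6
  have e2 := d3 a c d b h2 h3 h1 h6 h4' (ok_symm _ _ h5)
  have e3 := al2_symm a b c
  have e4 := al2_symm b c d
  have e5 := al2_symm c d b
  unfold S2
  have s1 : al2 c b a = al2 c a b := al2_p1 _ _ _
  have s2 : al2 c d b = al2 b c d := al2_p2 _ _ _
  have t := CharTwo.add_self_eq_zero (al2 c a b)
  have t' := CharTwo.add_self_eq_zero (al2 b c d)
  have t2 := CharTwo.two_eq_zero (R := ZMod 2)
  linear_combination e1 - e3 - s1 - s2 - (al2 c a b + al2 b c d)*t2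

theorem cube (v : Fin 8 → L) (h : ∀ i j, ok (v i) (v j)) :
    (S2 (v 0) (v 2) (v 1) (v 3) + S2 (v 4) (v 6) (v 5) (v 7)) +
    (S2 (v 0) (v 4) (v 1) (v 5) + S2 (v 2) (v 6) (v 3) (v 7)) +
    (S2 (v 0) (v 4) (v 2) (v 6) + S2 (v 1) (v 5) (v 3) (v 7)) = 0 := by
  have g : ∀ i j k l, al2 (v j) (v k) (v l) + al2 (v i) (v k) (v l) + al2 (v i) (v j) (v l) + al2 (v i) (v j) (v k) = 0 :=
    fun i j k l => d3 _ _ _ _ (h _ _) (h _ _) (h _ _) (h _ _) (h _ _) (h _ _)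
  have t2 := CharTwo.two_eq_zero (R := ZMod 2)
  unfold S2
  linear_combination g 0 1 3 7 + g 0 1 5 7 + g 0 2 3 7 + g 0 2 6 7 + g 0 4 5 7 + g 0 4 6 7
    - (al2 (v 0) (v 1) (v 7) + al2 (v 0) (v 2) (v 7) + al2 (v 0) (v 3) (v 7)+ al2 (v 0) (v 4) (v 7)+ al2 (v 0) (v 5) (v 7)+ al2 (v 0) (v 6) (v 7)) * t2

theorem S2_T (a b c d : L) (h1 : ok a b) (h2 : ok a c) (h3 : ok a d) (h5 : ok b d)
    (h6 : ok c d) : S2 a b c d + S2 (ng a) (ng b) (ng c) (ng d) =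
      (al1 a b + al1 c d) + (al1 a c + al1 b d) := by
  have e1 := d2 a b d h1 h5 h3
  have e2 := d2 a c d h2 h6 h3
  have t2 := CharTwo.two_eq_zero (R := ZMod 2)
  unfold S2
  linear_combination -e1 - e2 + al1 a d * t2

theorem discrete (N : ℕ) (f : ℕ → ℕ → ℕ → L)
    (hok : ∀ i j k i' j' k', i ≤ N → j ≤ N → k ≤ N → i' ≤ N → j' ≤ N → k' ≤ N →
      i ≤ i' + 1 → i' ≤ i + 1 → j ≤ j' + 1 → j' ≤ j + 1 → k ≤ k' + 1 → k' ≤ k + 1 →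
      ok (f i j k) (f i' j' k'))
    (hX : ∀ j k, f N j k = ng (f 0 j k))
    (hZ : ∀ i j, j ≤ N → f i j N = ng (f i (N - j) 0))
    (h0 : ∀ i k, f i 0 k = f i 0 0) (h1 : ∀ i k, f i N k = f i N 0) : False := by
  have t2 := CharTwo.two_eq_zero (R := ZMod 2)
  let FX := fun i j k => S2 (f i j k) (f i (j+1) k) (f i j (k+1)) (f i (j+1) (k+1))
  let FY := fun i j k => S2 (f i j k) (f (i+1) j k) (f i j (k+1)) (f (i+1) j (k+1))
  let FZ := fun i j k => S2 (f i j k) (f (i+1) j k) (f i (j+1) k) (f (i+1) (j+1) k)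
  have hcube : ∀ i ∈ range N, ∀ j ∈ range N, ∀ k ∈ range N,
      (FX i j k + FX (i+1) j k) + (FY i j k + FY i (j+1) k) + (FZ i j k + FZ i j (k+1)) = 0 := by
    intro i hi j hj k hk
    simp only [Finset.mem_range] at hi hj hk
    have := cube ![f i j k, f i j (k+1), f i (j+1) k, f i (j+1) (k+1), f (i+1) j k, f (i+1) j (k+1),
      f (i+1) (j+1) k, f (i+1) (j+1) (k+1)] (by
        intro a b
        fin_cases a <;> fin_cases b <;> (apply hok <;> omega))
    simpa [FX, FY, FZ] using this
  have hsum : ∑ i ∈ range N, ∑ j ∈ range N, ∑ k ∈ range N,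
      ((FX i j k + FX (i+1) j k) + (FY i j k + FY i (j+1) k) + (FZ i j k + FZ i j (k+1))) = 0 :=
    sum_eq_zero fun i hi => sum_eq_zero fun j hj => sum_eq_zero fun k hk => hcube i hi j hj k hk
  have sX : ∑ i ∈ range N, ∑ j ∈ range N, ∑ k ∈ range N, (FX i j k + FX (i+1) j k) =
      ∑ j ∈ range N, ∑ k ∈ range N, (FX 0 j k + FX N j k) := by
    rw [sum_comm]
    refine sum_congr rfl fun j _ => ?_
    rw [sum_comm]
    exact sum_congr rfl fun k _ => tele (fun i => FX i j k) N
  have sY : ∑ i ∈ range N, ∑ j ∈ range N, ∑ k ∈ range N, (FY i j k + FY i (j+1) k) = 0 := by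
    refine sum_eq_zero fun i _ => ?_
    rw [sum_comm]
    refine sum_eq_zero fun k _ => ?_
    rw [tele (fun j => FY i j k) N]
    simp only [FY, S2, h0 _ k, h0 _ (k+1), h1 _ k, h1 _ (k+1), al2_d1, add_zero]
  have sZ : ∑ i ∈ range N, ∑ j ∈ range N, ∑ k ∈ range N, (FZ i j k + FZ i j (k+1)) =
      ∑ i ∈ range N, ∑ j ∈ range N, (FZ i j 0 + FZ i j N) :=
    sum_congr rfl fun i _ => sum_congr rfl fun j _ => tele (fun k => FZ i j k) N
  simp only [sum_add_distrib (f := fun k => _ + _ + (_ + _)), sum_add_distrib] at hsum sX sY sZ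
  have hFZN : ∀ i ∈ range N, ∑ j ∈ range N, FZ i j N = ∑ j ∈ range N,
      S2 (ng (f i j 0)) (ng (f (i+1) j 0)) (ng (f i (j+1) 0)) (ng (f (i+1) (j+1) 0)) := by
    intro i hi
    rw [← sum_range_reflect]
    refine sum_congr rfl fun j hj => ?_
    simp only [Finset.mem_range] at hj hi
    have e1 : N - 1 - j + 1 = N - j := by omega
    have e2 : N - (N - j) = j := by omega
    have e3 : N - (N - 1 - j) = j + 1 := by omega
    have := S2_flip (f i (N-1-j) N) (f (i+1) (N-1-j) N) (f i (N-1-j+1) N) (f (i+1) (N-1-j+1) N)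
      (by apply hok <;> omega) (by apply hok <;> omega) (by apply hok <;> omega)
      (by apply hok <;> omega) (by apply hok <;> omega) (by apply hok <;> omega) (by apply hok <;> omega)
    simp only [FZ]
    rw [this, e1, hZ _ _ (by omega : N - j ≤ N), hZ _ _ (by omega : N - j ≤ N),
      hZ _ _ (by omega : N - 1 - j ≤ N), hZ _ _ (by omega : N - 1 - j ≤ N), e2, e3]
  -- T1 sums
  let A := ∑ j ∈ range N, (al1 (f 0 j 0) (f 0 (j+1) 0) + al1 (ng (f 0 j 0)) (ng (f 0 (j+1) 0)))
  let B := ∑ i ∈ range N, (al1 (f i 0 0) (f (i+1) 0 0) + al1 (ng (f i 0 0)) (ng (f (i+1) 0 0)))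
  have hXT : ∑ j ∈ range N, ∑ k ∈ range N, (FX 0 j k + FX N j k) = A := by
    have : ∀ j ∈ range N, ∀ k ∈ range N, FX 0 j k + FX N j k =
      (al1 (f 0 j k) (f 0 (j+1) k) + al1 (f 0 j (k+1)) (f 0 (j+1) (k+1))) +
      (al1 (f 0 j k) (f 0 j (k+1)) + al1 (f 0 (j+1) k) (f 0 (j+1) (k+1))) := by
      intro j hj k hk
      simp only [Finset.mem_range] at hj hk
      simp only [FX, hX]
      apply S2_T <;> apply hok <;> omega
    rw [sum_congr rfl fun j hj => sum_congr rfl fun k hk => this j hj k hk]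
    have e1 : ∑ j ∈ range N, ∑ k ∈ range N,
      ((al1 (f 0 j k) (f 0 (j+1) k) + al1 (f 0 j (k+1)) (f 0 (j+1) (k+1))) +
      (al1 (f 0 j k) (f 0 j (k+1)) + al1 (f 0 (j+1) k) (f 0 (j+1) (k+1)))) =
      ∑ j ∈ range N, (∑ k ∈ range N,
      (al1 (f 0 j k) (f 0 (j+1) k) + al1 (f 0 j (k+1)) (f 0 (j+1) (k+1)))) +
      ∑ k ∈ range N, ∑ j ∈ range N,
      (al1 (f 0 j k) (f 0 j (k+1)) + al1 (f 0 (j+1) k) (f 0 (j+1) (k+1))) := by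
      rw [sum_comm (s := range N) (t := range N) (f := fun k j => (al1 (f 0 j k) (f 0 j (k+1)) + al1 (f 0 (j+1) k) (f 0 (j+1) (k+1)))), ← sum_add_distrib]
      exact sum_congr rfl fun j _ => sum_add_distrib
    rw [e1]
    have e2 : ∑ k ∈ range N, ∑ j ∈ range N,
      (al1 (f 0 j k) (f 0 j (k+1)) + al1 (f 0 (j+1) k) (f 0 (j+1) (k+1))) = 0 := by
      refine sum_eq_zero fun k _ => ?_
      rw [tele (fun j => al1 (f 0 j k) (f 0 j (k+1))) N]
      simp only [h0 _ k, h0 _ (k+1), h1 _ k, h1 _ (k+1), al1_self, add_zero]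
    have e3 : ∀ j ∈ range N, ∑ k ∈ range N,
      (al1 (f 0 j k) (f 0 (j+1) k) + al1 (f 0 j (k+1)) (f 0 (j+1) (k+1))) =
       al1 (f 0 j 0) (f 0 (j+1) 0) + al1 (f 0 j N) (f 0 (j+1) N) :=
      fun j _ => tele (fun k => al1 (f 0 j k) (f 0 (j+1) k)) N
    rw [e2, add_zero, sum_congr rfl e3]
    simp only [A, sum_add_distrib]
    congr 1
    rw [← sum_range_reflect]
    refine sum_congr rfl fun j hj => ?_
    simp only [Finset.mem_range] at hj
    have e1 : N - 1 - j + 1 = N - j := by omega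
    have e2 : N - (N - j) = j := by omega
    have e3 : N - (N - 1 - j) = j + 1 := by omega
    rw [hZ _ _ (by omega : N - 1 - j ≤ N), e1, hZ _ _ (by omega : N - j ≤ N), e2, e3, al1_symm]
  have hZT : ∑ i ∈ range N, ∑ j ∈ range N, (FZ i j 0 + FZ i j N) = A + B := by
    have e0 : ∑ i ∈ range N, ∑ j ∈ range N, (FZ i j 0 + FZ i j N) =
       ∑ i ∈ range N, ∑ j ∈ range N,
      ((al1 (f i j 0) (f (i+1) j 0) + al1 (f i (j+1) 0) (f (i+1) (j+1) 0)) +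
      (al1 (f i j 0) (f i (j+1) 0) + al1 (f (i+1) j 0) (f (i+1) (j+1) 0))) := by
      refine sum_congr rfl fun i hi => ?_
      rw [sum_add_distrib, hFZN i hi, ← sum_add_distrib]
      refine sum_congr rfl fun j hj => ?_
      simp only [Finset.mem_range] at hj hi
      apply S2_T <;> apply hok <;> omega
    rw [e0]
    have e1 : ∑ i ∈ range N, ∑ j ∈ range N,
      ((al1 (f i j 0) (f (i+1) j 0) + al1 (f i (j+1) 0) (f (i+1) (j+1) 0)) +
      (al1 (f i j 0) (f i (j+1) 0) + al1 (f (i+1) j 0) (f (i+1) (j+1) 0))) =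
      ∑ i ∈ range N, (∑ j ∈ range N,
      (al1 (f i j 0) (f (i+1) j 0) + al1 (f i (j+1) 0) (f (i+1) (j+1) 0))) +
      ∑ j ∈ range N, ∑ i ∈ range N,
      (al1 (f i j 0) (f i (j+1) 0) + al1 (f (i+1) j 0) (f (i+1) (j+1) 0)) := by
      rw [sum_comm (s := range N) (t := range N) (f := fun j i => (al1 (f i j 0) (f i (j+1) 0) + al1 (f (i+1) j 0) (f (i+1) (j+1) 0))), ← sum_add_distrib]
      exact sum_congr rfl fun j _ => sum_add_distrib
    rw [e1, add_comm]
    congr 1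
    · refine sum_congr rfl fun j _ => ?_
      rw [tele (fun i => al1 (f i j 0) (f i (j+1) 0)) N, hX, hX]
    · refine sum_congr rfl fun i _ => ?_
      have hN : ∀ i, f i N 0 = ng (f i 0 0) := fun i => by
        rw [← h1 i N, hZ i N le_rfl, Nat.sub_self]
      rw [tele (fun j => al1 (f i j 0) (f (i+1) j 0)) N, hN, hN]
  have hB : B = 1 := by
    have : B = ∑ i ∈ range N, (al0 (f i 0 0) + al0 (f (i+1) 0 0)) := by
      refine sum_congr rfl fun i hi => ?_
      simp only [Finset.mem_range] at hi
      exact (d1 _ _ (by apply hok <;> omega)).symm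
    rw [this, tele (fun i => al0 (f i 0 0)) N, hX, al0_T]
  simp only [sum_add_distrib] at hXT hZT
  have : (1 : ZMod 2) = 0 := by
    linear_combination hsum - sX - sY - sZ - hXT - hZT - hB + (- A  ) * t2
  exact absurd this (by decide)
end TCaux

namespace TCaux

noncomputable def labi (c : ℝ) (v : Fin 3 → ℝ) : Fin 3 :=
  if c ≤ |v 0| then 0 else if c ≤ |v 1| then 1 else 2
noncomputable def lab (c : ℝ) (v : Fin 3 → ℝ) : L := (labi c v, decide (0 < v (labi c v)))

theorem labi_spec (c : ℝ) (v : Fin 3 → ℝ) (hc : 0 < c) (h : c ≤ ‖v‖) : c ≤ |v (labi c v)| := by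
  unfold labi
  split_ifs with h0 h1
  · exact h0
  · exact h1
  · by_contra h2
    push Not at h0 h1 h2
    have : ‖v‖ < c := by
      rw [pi_norm_lt_iff hc]
      intro i
      fin_cases i <;> simpa
    linarith

theorem lab_neg (c : ℝ) (v : Fin 3 → ℝ) (hc : 0 < c) (h : c ≤ ‖v‖) : lab c (-v) = ng (lab c v) := by
  have h1 : labi c (-v) = labi c v := by simp [labi]
  have h2 := labi_spec c v hc h
  unfold lab ng
  rw [h1]
  ext1
  · rfl
  · simp only [Pi.neg_apply]
    by_cases h3 : 0 < v (labi c v)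
    · simp [h3, h3.le]
    · have : v (labi c v) ≠ 0 := by
        intro h; rw [h] at h2; simp at h2; linarith
      have : v (labi c v) < 0 := lt_of_le_of_ne (not_lt.1 h3) this
      simp [this, this.le]

theorem lab_ok (c : ℝ) (v v' : Fin 3 → ℝ) (hc : 0 < c) (h : c ≤ ‖v‖) (h' : c ≤ ‖v'‖)
    (hd : dist v v' < c) : ok (lab c v) (lab c v') := by
  have h2 := labi_spec c v hc h
  have h3 := labi_spec c v' hc h'
  unfold ok
  simp only [Bool.not_eq_true', decide_eq_false_iff_not]
  intro he
  simp only [lab, ng, Prod.mk.injEq] at he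
  obtain ⟨h4, h5⟩ := he
  rw [← h4] at h3 h5
  have h6 := (dist_le_pi_dist v v' (labi c v)).trans_lt hd
  rw [Real.dist_eq] at h6
  set a := v (labi c v)
  set b := v' (labi c v)
  by_cases ha : 0 < a
  · have hb : ¬ 0 < b := by simpa [ha] using h5
    rw [abs_of_pos ha] at h2
    have := le_abs_self (a - b)
    linarith
  · have hb : 0 < b := by simpa [ha] using h5
    rw [abs_of_pos hb] at h3
    have := neg_abs_le (a - b)
    linarith

theorem core (F : ℝ × ℝ × ℝ → (Fin 3 → ℝ)) (hF : Continuous F) (hnz : ∀ x, F x ≠ 0)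
    (hX : ∀ s r, F (1, s, r) = - F (0, s, r))
    (hZ : ∀ t s, F (t, s, 1) = - F (t, 1 - s, 0))
    (h0 : ∀ t r, F (t, 0, r) = F (t, 0, 0))
    (h1 : ∀ t r, F (t, 1, r) = F (t, 1, 0)) : False := by
  let K : Set (ℝ × ℝ × ℝ) := Set.Icc 0 1 ×ˢ Set.Icc 0 1 ×ˢ Set.Icc 0 1
  have hK : IsCompact K := isCompact_Icc.prod (isCompact_Icc.prod isCompact_Icc)
  have hne : K.Nonempty := ⟨(0, 0, 0), by simp [K]⟩
  obtain ⟨x0, hx0, hmin⟩ := hK.exists_isMinOn hne (hF.norm.continuousOn)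
  set c := ‖F x0‖ with hc_def
  have hc : 0 < c := norm_pos_iff.2 (hnz x0)
  have hcK : ∀ x ∈ K, c ≤ ‖F x‖ := fun x hx => hmin hx
  have huc := hK.uniformContinuousOn_of_continuous hF.continuousOn
  rw [Metric.uniformContinuousOn_iff] at huc
  obtain ⟨δ, hδ, hd⟩ := huc c hc
  obtain ⟨m, hm⟩ := exists_nat_one_div_lt hδ
  set N := m + 1 with hN
  have hNp : (0 : ℝ) < N := by positivity
  have hN1 : (1 : ℝ) / N < δ := by simpa [hN] using hm
  let cl : ℕ → ℝ := fun i => (min i N : ℕ) / (N : ℝ)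
  have hcl : ∀ i, cl i ∈ Set.Icc (0:ℝ) 1 := by
    intro i
    refine ⟨by positivity, ?_⟩
    rw [div_le_one hNp]
    exact_mod_cast min_le_right _ _
  have hcl0 : cl 0 = 0 := by simp [cl]
  have hclN : cl N = 1 := by simp only [cl, min_self]; field_simp
  have hclr : ∀ j ≤ N, cl j = 1 - cl (N - j) := by
    intro j hj
    simp only [cl]
    rw [min_eq_left hj, min_eq_left (by omega), Nat.cast_sub hj]
    field_simp; ring
  have hcd : ∀ i j : ℕ, i ≤ N → j ≤ N → i ≤ j + 1 → j ≤ i + 1 → dist (cl i) (cl j) < δ := by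
    intro i j hi hj hij hji
    refine lt_of_le_of_lt ?_ hN1
    simp only [cl]
    rw [min_eq_left hi, min_eq_left hj, Real.dist_eq, ← sub_div, abs_div, abs_of_pos hNp]
    gcongr
    have : (i : ℝ) ≤ j + 1 := by exact_mod_cast hij
    have : (j : ℝ) ≤ i + 1 := by exact_mod_cast hji
    rw [abs_le]; constructor <;> linarith
  have hKm : ∀ i j k, (cl i, cl j, cl k) ∈ K := fun i j k => ⟨hcl i, hcl j, hcl k⟩
  refine discrete N (fun i j k => lab c (F (cl i, cl j, cl k))) ?_ ?_ ?_ ?_ ?_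
  · intro i j k i' j' k' a1 a2 a3 a4 a5 a6 b1 b2 b3 b4 b5 b6
    refine lab_ok c _ _ hc (hcK _ (hKm _ _ _)) (hcK _ (hKm _ _ _)) (hd _ (hKm _ _ _) _ (hKm _ _ _) ?_)
    simp only [Prod.dist_eq, max_lt_iff]
    exact ⟨hcd _ _ a1 a4 b1 b2, hcd _ _ a2 a5 b3 b4, hcd _ _ a3 a6 b5 b6⟩
  · intro j k
    simp only [hclN, hcl0, hX]
    rw [← hcl0]
    exact lab_neg c _ hc (hcK _ (hKm _ _ _))
  · intro i j hj
    rw [hclN, hcl0, hZ, hclr j hj, sub_sub_cancel, ← hcl0]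
    exact lab_neg c _ hc (hcK _ (hKm _ _ _))
  · intro i k
    simp only [hcl0]
    rw [h0]
  · intro i k
    simp only [hclN, hcl0]
    rw [h1]
end TCaux

namespace TCaux
open ComplexConjugate

abbrev V3 := ℂ × ℂ × ℂ
def B (z u : V3) : ℂ := z.1 * u.2.1 + z.2.1 * u.1 + z.2.2 * u.2.2
def sh (z : V3) : V3 := (conj z.2.1, conj z.1, conj z.2.2)
def cr (u v : V3) : V3 :=
  (u.2.2 * v.1 - u.1 * v.2.2, -(u.2.2 * v.2.1 - u.2.1 * v.2.2), u.1 * v.2.1 - u.2.1 * v.1)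
def W (z : V3) : ℂ := B z z
def W1 (w : ℂ) : ℂ := 1 - w * conj w

theorem B_add (u u' v : V3) : B (u + u') v = B u v + B u' v := by simp [B]; ring
theorem B_smul (a : ℂ) (u v : V3) : B (a • u) v = a * B u v := by simp [B]; ring
theorem B_comm (u v : V3) : B u v = B v u := by simp [B]; ring
theorem B_sh (u v : V3) : B (sh u) (sh v) = conj (B u v) := by simp [B, sh]; ring
theorem sh_sh (u : V3) : sh (sh u) = u := by simp [sh]
theorem B_sh' (u v : V3) : B (sh u) v = conj (B u (sh v)) := by rw [← B_sh, sh_sh]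
theorem sh_add (u v : V3) : sh (u + v) = sh u + sh v := by simp [sh]
theorem sh_smul (a : ℂ) (u : V3) : sh (a • u) = conj a • sh u := by simp [sh]
theorem cr_add (u u' v : V3) : cr (u + u') v = cr u v + cr u' v := by
  simp [cr]; refine ⟨?_, ?_, ?_⟩ <;> ring
theorem cr_smul (a : ℂ) (u v : V3) : cr (a • u) v = a • cr u v := by
  simp [cr]; refine ⟨?_, ?_, ?_⟩ <;> ring
theorem cr_anti (u v : V3) : cr u v = (-1 : ℂ) • cr v u := by
  simp [cr]; refine ⟨?_, ?_, ?_⟩ <;> ring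
theorem cr_add' (u u' v : V3) : cr v (u + u') = cr v u + cr v u' := by
  simp [cr]; refine ⟨?_, ?_, ?_⟩ <;> ring
theorem cr_smul' (a : ℂ) (u v : V3) : cr v (a • u) = a • cr v u := by
  simp [cr]; refine ⟨?_, ?_, ?_⟩ <;> ring
theorem cr_self (u : V3) : cr u u = 0 := by
  simp [cr]; refine ⟨?_, ?_, ?_⟩ <;> ring
theorem B_add' (u u' v : V3) : B v (u + u') = B v u + B v u' := by simp [B]; ring
theorem B_smul' (a : ℂ) (u v : V3) : B v (a • u) = a * B v u := by simp [B]; ring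
theorem cr_cr (u v t : V3) : cr u (cr v t) = B u v • t + (- B u t) • v := by
  ext <;> simp [cr, B] <;> ring
theorem B_cr (u v : V3) : B u (cr u v) = 0 := by simp [cr, B]; ring
theorem B_cr' (u v : V3) : B u (cr v u) = 0 := by simp [cr, B]; ring
theorem B_crcr (u v u' v' : V3) : B (cr u v) (cr u' v') = B u v' * B v u' - B u u' * B v v' := by
  simp [cr, B]; ring
theorem sh_cr (z : V3) : sh (cr z (sh z)) = cr z (sh z) := by
  simp [cr, sh]; refine ⟨?_, ?_, ?_⟩ <;> ring

def Nz (z : V3) : V3 := cr z (sh z)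

noncomputable def Pu (e u : V3) : ℂ := (B u (sh e) - conj (W e) * B u e) / W1 (W e)
noncomputable def Qu (e u : V3) : ℂ := (B u e - W e * B u (sh e)) / W1 (W e)
noncomputable def Ru (e u : V3) : ℂ := B u (Nz e) / W1 (W e)
noncomputable def Vm (e z u : V3) : V3 := Pu e u • z + Qu e u • sh z + Ru e u • Nz z

theorem decomp (e u : V3) (h1 : B e (sh e) = 1) (hw : W1 (W e) ≠ 0) : Vm e e u = u := by
  have key : (B e (sh e) * B u (sh e) - conj (W e) * B u e) • e + (B e (sh e) * B u e - W e * B u (sh e)) • sh e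
      + B u (Nz e) • Nz e = (B e (sh e) ^ 2 - W e * conj (W e)) • u := by
    ext <;> simp [Nz, B, W, cr, sh] <;> ring
  rw [h1, one_mul, one_mul] at key
  have : Vm e e u = (W1 (W e))⁻¹ • ((B u (sh e) - conj (W e) * B u e) • e + (B u e - W e * B u (sh e)) • sh e
      + B u (Nz e) • Nz e) := by
    simp only [Vm, Pu, Qu, Ru, smul_add, smul_smul]
    congr 2 <;> (congr 1; ring)
  rw [this, key, smul_smul, W1] at *
  rw [one_pow, inv_mul_cancel₀ hw, one_smul]

theorem Vm_add (e z u v : V3) : Vm e z (u + v) = Vm e z u + Vm e z v := by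
  simp only [Vm, Pu, Qu, Ru, B_add]; module
theorem Vm_smul (e z u : V3) (a : ℂ) : Vm e z (a • u) = a • Vm e z u := by
  simp only [Vm, Pu, Qu, Ru, B_smul, smul_add, smul_smul]; congr 2 <;> (congr 1; ring)

theorem conj_W1 (w : ℂ) : conj (W1 w) = W1 w := by simp [W1]; ring

theorem Vm_sh (e z u : V3) : Vm e z (sh u) = sh (Vm e z u) := by
  have h1 : Pu e (sh u) = conj (Qu e u) := by
    simp only [Pu, Qu, map_div₀, conj_W1, map_sub, map_mul]
    rw [B_sh, B_sh']
  have h2 : Qu e (sh u) = conj (Pu e u) := by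
    simp only [Pu, Qu, map_div₀, conj_W1, map_sub, map_mul, Complex.conj_conj]
    rw [B_sh, B_sh']
  have h3 : Ru e (sh u) = conj (Ru e u) := by
    simp only [Ru, map_div₀, conj_W1]
    rw [B_sh', Nz, sh_cr]
  simp only [Vm, h1, h2, h3, sh_add, sh_smul, sh_sh, Nz, sh_cr]
  abel

/-- data for a pair -/
structure Pr (e z : V3) : Prop where
  he : B e (sh e) = 1
  hz : B z (sh z) = 1
  hw : W z = W e
  hn : W1 (W e) ≠ 0

theorem B_sh_W (z : V3) : B (sh z) (sh z) = conj (W z) := by rw [B_sh]; rfl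

theorem Nz_c1 (z : V3) (h : B z (sh z) = 1) : cr z (Nz z) = W z • sh z + (-1 : ℂ) • z := by
  rw [Nz, cr_cr, h]; rfl
theorem Nz_c2 (z : V3) (h : B z (sh z) = 1) : cr (sh z) (Nz z) = (1 : ℂ) • sh z + (-conj (W z)) • z := by
  rw [Nz, cr_cr, B_sh_W, B_comm, h]
theorem Nz_B (z : V3) (h : B z (sh z) = 1) : B (Nz z) (Nz z) = W1 (W z) := by
  rw [Nz, B_crcr, B_comm (sh z) z, h, B_sh_W, W1, W]; ring
theorem Nz_B1 (z : V3) : B z (Nz z) = 0 := B_cr _ _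
theorem Nz_B2 (z : V3) : B (sh z) (Nz z) = 0 := B_cr' _ _

theorem lin_cr (z : V3) (h : B z (sh z) = 1) (p q r p' q' r' : ℂ) :
    cr (p • z + q • sh z + r • Nz z) (p' • z + q' • sh z + r' • Nz z) =
    (p * q' - q * p') • Nz z + (p * r' - r * p') • (W z • sh z + (-1 : ℂ) • z) +
     (q * r' - r * q') • ((1 : ℂ) • sh z + (-conj (W z)) • z) := by
  simp only [cr_add, cr_smul, cr_add', cr_smul', Nz_c1 z h, Nz_c2 z h, cr_self,
    cr_anti (Nz z) z, cr_anti (Nz z) (sh z), cr_anti (sh z) z, ← Nz.eq_1]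
  module

theorem lin_B (z : V3) (h : B z (sh z) = 1) (p q r p' q' r' : ℂ) :
    B (p • z + q • sh z + r • Nz z) (p' • z + q' • sh z + r' • Nz z) =
    p * p' * W z + (p * q' + q * p') + q * q' * conj (W z) + r * r' * W1 (W z) := by
  simp only [B_add, B_smul, B_add', B_smul', Nz_B z h, Nz_B1, Nz_B2, B_comm (Nz z) z, B_comm (Nz z) (sh z),
    B_comm (sh z) z, h, B_sh_W]
  rw [← W.eq_1]; ring

theorem Vm_e {e : V3} (he : B e (sh e) = 1) (hn : W1 (W e) ≠ 0) (z : V3) : Vm e z e = z := by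
  have hP : Pu e e = 1 := by
    rw [Pu, he, ← W.eq_1, div_eq_one_iff_eq hn]; simp [W1]; ring
  have hQ : Qu e e = 0 := by rw [Qu, he, ← W.eq_1]; simp
  have hR : Ru e e = 0 := by rw [Ru, Nz_B1]; simp
  simp [Vm, hP, hQ, hR]
theorem Vm_N {e z : V3} (h : Pr e z) : Vm e z (Nz e) = Nz z := by
  have hP : Pu e (Nz e) = 0 := by
    rw [Pu, B_comm, Nz_B2, B_comm, Nz_B1]; simp
  have hQ : Qu e (Nz e) = 0 := by rw [Qu, B_comm, Nz_B1, B_comm, Nz_B2]; simp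
  have hR : Ru e (Nz e) = 1 := by rw [Ru, Nz_B e h.he, div_self h.hn]
  simp [Vm, hP, hQ, hR]

theorem Vm_cr {e z : V3} (h : Pr e z) (u v : V3) : cr (Vm e z u) (Vm e z v) = Vm e z (cr u v) := by
  conv_rhs => rw [← decomp e u h.he h.hn, ← decomp e v h.he h.hn]
  have a1 := Vm_e h.he h.hn z
  rw [Vm.eq_1 e z u, Vm.eq_1 e z v, Vm.eq_1 e e u, Vm.eq_1 e e v, lin_cr z h.hz, lin_cr e h.he]
  simp only [Vm_add, Vm_smul, Vm_sh, Vm_N h, a1, h.hw]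

theorem Vm_B {e z : V3} (h : Pr e z) (u v : V3) : B (Vm e z u) (Vm e z v) = B u v := by
  conv_rhs => rw [← decomp e u h.he h.hn, ← decomp e v h.he h.hn]
  rw [Vm, Vm, Vm, Vm, lin_B z h.hz, lin_B e h.he, h.hw]

theorem Vm_Nz {e z : V3} (h : Pr e z) (u : V3) : Nz (Vm e z u) = Vm e z (Nz u) := by
  rw [Nz, ← Vm_sh, Vm_cr h, Nz]

theorem Vm_comp {e z : V3} (h : Pr e z) (u v : V3) (hu : B u (sh u) = 1) (hn : W1 (W u) ≠ 0) :
    Vm u (Vm e z u) v = Vm e z v := by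
  conv_rhs => rw [← decomp u v hu hn]
  rw [Vm.eq_1 u (Vm e z u) v, Vm.eq_1 u u v]
  simp only [Vm_add, Vm_smul, Vm_sh, Vm_Nz h]
end TCaux

namespace TCaux
open ComplexConjugate

noncomputable def ss (w : ℂ) : ℝ := √(1 - Complex.normSq w)
noncomputable def bb (w : ℂ) : ℝ := √((1 + ss w) / 2)
noncomputable def aa (w : ℂ) : ℂ := w / (2 * bb w)
noncomputable def c1 (w : ℂ) : ℝ := Real.smoothTransition (4 * Complex.normSq w - 1)
noncomputable def c2 (w : ℂ) : ℝ := Real.smoothTransition (3 - 4 * Complex.normSq w)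
noncomputable def nu (j : ℕ) (w : ℂ) : ℝ := √(c1 w ^ 2 * Complex.normSq w ^ j + c2 w ^ 2)
noncomputable def pp (j : ℕ) (w : ℂ) : ℂ := c1 w * w ^ j / nu j w
noncomputable def qq (j : ℕ) (w : ℂ) : ℂ := c2 w / nu j w
noncomputable def sq2 : ℂ := Complex.I * (√2 : ℝ)
noncomputable def ee (j : ℕ) (w : ℂ) : V3 :=
  ((conj (pp j w))^2 * aa w + qq j w ^ 2 * bb w, qq j w ^ 2 * aa w + pp j w ^ 2 * bb w,
   sq2 * (pp j w * qq j w * bb w - conj (pp j w) * qq j w * aa w))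

theorem sq2_sq : sq2 ^ 2 = -2 := by
  rw [sq2, mul_pow, Complex.I_sq, ← Complex.ofReal_pow, Real.sq_sqrt (by norm_num)]; simp
theorem conj_sq2 : conj sq2 = - sq2 := by simp [sq2]

theorem ss_sq {w : ℂ} (h : Complex.normSq w < 1) : ss w ^ 2 = 1 - Complex.normSq w :=
  Real.sq_sqrt (by linarith)
theorem ss_pos {w : ℂ} (h : Complex.normSq w < 1) : 0 < ss w := Real.sqrt_pos.2 (by linarith)
theorem ss_nonneg (w : ℂ) : 0 ≤ ss w := Real.sqrt_nonneg _
theorem bb_sq (w : ℂ) : bb w ^ 2 = (1 + ss w) / 2 :=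
  Real.sq_sqrt (by have := ss_nonneg w; positivity)
theorem bb_pos (w : ℂ) : 0 < bb w := Real.sqrt_pos.2 (by have := ss_nonneg w; positivity)
theorem ab (w : ℂ) : 2 * (aa w * bb w) = w := by
  have : (bb w : ℂ) ≠ 0 := by exact_mod_cast (bb_pos w).ne'
  rw [aa]; field_simp
theorem aa_sq {w : ℂ} (h : Complex.normSq w < 1) : aa w * conj (aa w) = ((1 - ss w) / 2 : ℝ) := by
  have h1 := bb_pos w
  have h2 := bb_sq w
  have h3 := ss_sq h
  have h4 : aa w * conj (aa w) = ((Complex.normSq w / (4 * bb w ^ 2) : ℝ) : ℂ) := by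
    rw [aa, map_div₀, div_mul_div_comm, Complex.mul_conj]
    push_cast
    congr 1
    rw [map_mul, Complex.conj_ofReal, map_ofNat]; ring
  rw [h4]
  congr 1
  rw [div_eq_iff (by positivity), h2]
  linear_combination h3

theorem nu_pos_aux (j : ℕ) (w : ℂ) : 0 < c1 w ^ 2 * Complex.normSq w ^ j + c2 w ^ 2 := by
  by_cases h : Complex.normSq w < 3 / 4
  · have : 0 < c2 w := Real.smoothTransition.pos_of_pos (by linarith)
    have := Complex.normSq_nonneg w
    positivity
  · have : 0 < c1 w := Real.smoothTransition.pos_of_pos (by linarith)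
    have : 0 < Complex.normSq w := by linarith
    positivity
theorem nu_pos (j : ℕ) (w : ℂ) : 0 < nu j w := Real.sqrt_pos.2 (nu_pos_aux j w)
theorem nu_sq (j : ℕ) (w : ℂ) : nu j w ^ 2 = c1 w ^ 2 * Complex.normSq w ^ j + c2 w ^ 2 :=
  Real.sq_sqrt (nu_pos_aux j w).le
theorem conj_qq (j : ℕ) (w : ℂ) : conj (qq j w) = qq j w := by simp [qq]
theorem pq (j : ℕ) (w : ℂ) : pp j w * conj (pp j w) + qq j w ^ 2 = 1 := by
  have h1 := nu_pos j w
  have h2 := nu_sq j w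
  have h3 : (nu j w : ℂ) ≠ 0 := by exact_mod_cast h1.ne'
  have h4 : ((nu j w : ℂ)) ^ 2 = c1 w ^ 2 * (w * conj w) ^ j + c2 w ^ 2 := by
    rw [Complex.mul_conj]; exact_mod_cast h2
  simp only [pp, qq, map_div₀, map_mul, map_pow, Complex.conj_ofReal]
  field_simp
  rw [h4, mul_pow]; ring

theorem ee_W (j : ℕ) (w : ℂ) : W (ee j w) = w := by
  have h1 := pq j w
  have h2 := ab w
  have h3 := sq2_sq
  simp only [W, B, ee]
  set p := pp j w
  set q := qq j w
  set p' := conj p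
  set a := aa w
  set b : ℂ := (bb w : ℂ)
  linear_combination (p * q * b - p' * q * a)^2 * h3 + 2 * a * b * (p * p' + q^2 + 1) * h1 + h2

theorem ee_1 (j : ℕ) {w : ℂ} (h : Complex.normSq w < 1) : B (ee j w) (sh (ee j w)) = 1 := by
  have h1 := pq j w
  have h3 := sq2_sq
  have h4 := aa_sq h
  have h5 : (bb w : ℂ)^2 = ((1 + ss w)/2 : ℝ) := by exact_mod_cast bb_sq w
  simp only [B, ee, sh, map_add, map_mul, map_pow, map_sub, conj_qq, conj_sq2, Complex.conj_conj,
    Complex.conj_ofReal]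
  have h6 : aa w * conj (aa w) + (bb w : ℂ)^2 = 1 := by
    rw [h4, h5]; push_cast; ring
  set p := pp j w
  set q := qq j w
  set p' := conj p
  set a := aa w
  set a' := conj a
  set b : ℂ := (bb w : ℂ)
  linear_combination (-1) * (p * q * b - p' * q * a) * (p' * q * b - p * q * a') * h3 + (a * a' + b^2)*(p * p' + q^2 + 1) * h1 + h6

theorem W1_ne {w : ℂ} (h : Complex.normSq w < 1) : W1 w ≠ 0 := by
  rw [W1, Complex.mul_conj]
  have : (1 : ℂ) - (Complex.normSq w : ℝ) = ((1 - Complex.normSq w : ℝ) : ℂ) := by push_cast; rfl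
  rw [this]
  exact_mod_cast (by linarith : (1 - Complex.normSq w : ℝ) ≠ 0)

theorem ee_big (j : ℕ) {w ζ : ℂ} (h : 3/4 ≤ Complex.normSq w) (hζ : Complex.normSq ζ = 1)
    (hj : ζ ^ (4 * j) = ζ) : ee j (ζ * w) = ζ ^ (2 * j) • ee j w := by
  have hn : Complex.normSq (ζ * w) = Complex.normSq w := by rw [map_mul, hζ, one_mul]
  have e1 : ss (ζ * w) = ss w := by rw [ss, hn, ss]
  have e2 : bb (ζ * w) = bb w := by rw [bb, e1, bb]
  have e3 : c1 (ζ * w) = c1 w := by rw [c1, hn, c1]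
  have e4 : c2 (ζ * w) = c2 w := by rw [c2, hn, c2]
  have e5 : nu j (ζ * w) = nu j w := by rw [nu, hn, e3, e4, nu]
  have e6 : aa (ζ * w) = ζ * aa w := by rw [aa, e2, aa]; ring
  have e7 : pp j (ζ * w) = ζ ^ j * pp j w := by rw [pp, e5, e3, pp]; ring
  have e8 : c2 w = 0 := Real.smoothTransition.zero_of_nonpos (by linarith)
  have e9 : qq j w = 0 := by rw [qq, e8]; simp
  have e10 : qq j (ζ * w) = 0 := by rw [qq, e4, e8]; simp
  have hz : ζ * conj ζ = 1 := by rw [Complex.mul_conj, hζ]; simp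
  have hz2 : ζ ^ (2 * j) = conj ζ ^ (2 * j) * ζ := by
    have : conj ζ ^ (2 * j) * ζ = conj ζ ^ (2 * j) * ζ ^ (4 * j) := by rw [hj]
    rw [this, show 4 * j = 2 * j + 2 * j by ring, pow_add, ← mul_assoc, ← mul_pow, mul_comm (conj ζ), hz]
    simp
  ext
  · simp only [ee, e6, e7, e9, e10, e2]
    simp only [Prod.smul_fst, smul_eq_mul]
    rw [hz2]
    simp; ring
  · simp only [ee, e6, e7, e9, e10, e2]
    simp; ring
  · simp [ee, e9, e10]

theorem ee_small (j : ℕ) {w : ℂ} (h : Complex.normSq w < 1/4) : ee j w = ((bb w : ℂ), aa w, 0) := by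
  have e3 : c1 w = 0 := Real.smoothTransition.zero_of_nonpos (by linarith)
  have e7 : pp j w = 0 := by rw [pp, e3]; simp
  have e8 : c2 w = 1 := Real.smoothTransition.one_of_one_le (by linarith)
  have e9 : nu j w = 1 := by rw [nu, e3, e8]; simp
  have e10 : qq j w = 1 := by rw [qq, e8, e9]; simp
  simp [ee, e7, e10]

open scoped ContDiff

theorem cd_conj : ContDiff ℝ ∞ (fun z : ℂ => conj z) := Complex.conjCLE.contDiff
theorem cd_normSq : ContDiff ℝ ∞ Complex.normSq := by
  have : (Complex.normSq : ℂ → ℝ) = fun z => Complex.reCLM z * Complex.reCLM z + Complex.imCLM z * Complex.imCLM z := by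
    ext z; simp [Complex.normSq_apply]
  rw [this]; fun_prop
theorem cd_ofReal : ContDiff ℝ ∞ (fun x : ℝ => (x : ℂ)) := Complex.ofRealCLM.contDiff

section
variable {E : Type*} [NormedAddCommGroup E] [NormedSpace ℝ E]
theorem cda_conj {f : E → ℂ} {x : E} (h : ContDiffAt ℝ ∞ f x) : ContDiffAt ℝ ∞ (fun y => conj (f y)) x :=
  cd_conj.contDiffAt.comp x h
theorem cda_ofReal {f : E → ℝ} {x : E} (h : ContDiffAt ℝ ∞ f x) : ContDiffAt ℝ ∞ (fun y => (f y : ℂ)) x :=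
  cd_ofReal.contDiffAt.comp x h
theorem cda_re {f : E → ℂ} {x : E} (h : ContDiffAt ℝ ∞ f x) : ContDiffAt ℝ ∞ (fun y => (f y).re) x :=
  Complex.reCLM.contDiff.contDiffAt.comp x h
theorem cda_im {f : E → ℂ} {x : E} (h : ContDiffAt ℝ ∞ f x) : ContDiffAt ℝ ∞ (fun y => (f y).im) x :=
  Complex.imCLM.contDiff.contDiffAt.comp x h
theorem cda_normSq {f : E → ℂ} {x : E} (h : ContDiffAt ℝ ∞ f x) : ContDiffAt ℝ ∞ (fun y => Complex.normSq (f y)) x :=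
  cd_normSq.contDiffAt.comp x h
theorem cda_div {f g : E → ℂ} {x : E} (h : ContDiffAt ℝ ∞ f x) (h' : ContDiffAt ℝ ∞ g x) (hn : g x ≠ 0) :
    ContDiffAt ℝ ∞ (fun y => f y / g y) x := by
  simp only [div_eq_mul_inv]
  exact h.mul (h'.inv hn)
end

theorem cd_ss {w : ℂ} (h : Complex.normSq w < 1) : ContDiffAt ℝ ∞ ss w := by
  unfold ss
  exact (contDiffAt_const.sub cd_normSq.contDiffAt).sqrt (by linarith)
theorem cd_bb {w : ℂ} (h : Complex.normSq w < 1) : ContDiffAt ℝ ∞ bb w := by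
  unfold bb
  refine ((contDiffAt_const.add (cd_ss h)).div_const 2).sqrt ?_
  have := ss_nonneg w; positivity
theorem cd_aa {w : ℂ} (h : Complex.normSq w < 1) : ContDiffAt ℝ ∞ aa w := by
  unfold aa
  have := bb_pos w
  exact cda_div contDiffAt_id (contDiffAt_const.mul (cda_ofReal (cd_bb h))) (by simp [this.ne'])
theorem cd_c1 : ContDiff ℝ ∞ c1 := by
  unfold c1
  exact Real.smoothTransition.contDiff.comp ((contDiff_const.mul cd_normSq).sub contDiff_const)
theorem cd_c2 : ContDiff ℝ ∞ c2 := by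
  unfold c2
  exact Real.smoothTransition.contDiff.comp (contDiff_const.sub (contDiff_const.mul cd_normSq))
theorem cd_nu (j : ℕ) : ContDiff ℝ ∞ (nu j) := by
  unfold nu
  exact (((cd_c1.pow 2).mul (cd_normSq.pow j)).add (cd_c2.pow 2)).sqrt fun w => (nu_pos_aux j w).ne'
theorem cd_pp (j : ℕ) (w : ℂ) : ContDiffAt ℝ ∞ (pp j) w := by
  unfold pp
  exact cda_div ((cda_ofReal cd_c1.contDiffAt).mul (contDiffAt_id.pow j)) (cda_ofReal (cd_nu j).contDiffAt)
    (by exact_mod_cast (nu_pos j w).ne')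
theorem cd_qq (j : ℕ) (w : ℂ) : ContDiffAt ℝ ∞ (qq j) w := by
  unfold qq
  exact cda_div (cda_ofReal cd_c2.contDiffAt) (cda_ofReal (cd_nu j).contDiffAt)
    (by exact_mod_cast (nu_pos j w).ne')
theorem cd_ee (j : ℕ) {w : ℂ} (h : Complex.normSq w < 1) : ContDiffAt ℝ ∞ (ee j) w := by
  have h1 := cd_pp j w
  have h2 := cd_qq j w
  have h3 := cd_aa h
  have h4 := cda_ofReal (cd_bb h)
  have h5 := cda_conj h1
  unfold ee
  exact (((h5.pow 2).mul h3).add ((h2.pow 2).mul h4)).prodMk ((((h2.pow 2).mul h3).add ((h1.pow 2).mul h4)).prodMk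
    (contDiffAt_const.mul (((h1.mul h2).mul h4).sub ((h5.mul h2).mul h3))))
end TCaux

namespace TCaux
open ComplexConjugate
open scoped ContDiff

open Classical in
noncomputable def al (j : ℕ) (ζ : ℂ) (z : V3) : V3 :=
  if Complex.normSq (W z) < 1 then Vm (ee j (W z)) z (ee j (ζ * W z)) else ζ ^ (2 * j) • z

/-- admissible unit complex numbers -/
structure Adm (j : ℕ) (ζ : ℂ) : Prop where
  h1 : Complex.normSq ζ = 1
  hj : ζ ^ (4 * j) = ζ

theorem Adm.mul {j : ℕ} {ζ ξ : ℂ} (h : Adm j ζ) (h' : Adm j ξ) : Adm j (ζ * ξ) :=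
  ⟨by rw [map_mul, h.h1, h'.h1, one_mul], by rw [mul_pow, h.hj, h'.hj]⟩
theorem Adm.one (j : ℕ) : Adm j 1 := ⟨by simp, by simp⟩

theorem Adm.nw {j : ℕ} {ζ : ℂ} (h : Adm j ζ) (w : ℂ) : Complex.normSq (ζ * w) = Complex.normSq w := by
  rw [map_mul, h.h1, one_mul]

theorem al_lt (j : ℕ) (ζ : ℂ) {z : V3} (h : Complex.normSq (W z) < 1) :
    al j ζ z = Vm (ee j (W z)) z (ee j (ζ * W z)) := if_pos h

theorem Vm_ee (j : ℕ) {z : V3} (h : Complex.normSq (W z) < 1) : Vm (ee j (W z)) z (ee j (W z)) = z :=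
  Vm_e (ee_1 j h) (by rw [ee_W]; exact W1_ne h) z

theorem al_big {j : ℕ} {ζ : ℂ} (h : Adm j ζ) {z : V3} (hz : 3/4 ≤ Complex.normSq (W z)) :
    al j ζ z = ζ ^ (2 * j) • z := by
  by_cases hw : Complex.normSq (W z) < 1
  · rw [al_lt _ _ hw, ee_big j hz h.h1 h.hj, Vm_smul, Vm_ee _ hw]
  · rw [al, if_neg hw]

theorem mk_Pr (j : ℕ) {z : V3} (h1 : B z (sh z) = 1) (h : Complex.normSq (W z) < 1) : Pr (ee j (W z)) z :=
  ⟨ee_1 j h, h1, by rw [ee_W], by rw [ee_W]; exact W1_ne h⟩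

theorem al_W {j : ℕ} {ζ : ℂ} (h : Adm j ζ) {z : V3} (h1 : B z (sh z) = 1) : W (al j ζ z) = ζ * W z := by
  by_cases hw : Complex.normSq (W z) < 1
  · rw [al_lt _ _ hw, W, Vm_B (mk_Pr j h1 hw), ← W.eq_1, ee_W]
  · rw [al, if_neg hw, W, B_smul, B_smul', ← W.eq_1, ← mul_assoc, ← pow_add]
    congr 1
    rw [← two_mul, ← mul_assoc]; exact h.hj

theorem al_1 {j : ℕ} {ζ : ℂ} (h : Adm j ζ) {z : V3} (h1 : B z (sh z) = 1) :
    B (al j ζ z) (sh (al j ζ z)) = 1 := by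
  by_cases hw : Complex.normSq (W z) < 1
  · rw [al_lt _ _ hw, ← Vm_sh, Vm_B (mk_Pr j h1 hw), ee_1]
    rwa [h.nw]
  · rw [al, if_neg hw, sh_smul, B_smul, B_smul', h1, mul_one, Complex.mul_conj, map_pow, h.h1]; simp

theorem al_comp {j : ℕ} {ζ ξ : ℂ} (h : Adm j ζ) {z : V3} (h1 : B z (sh z) = 1) :
    al j ξ (al j ζ z) = al j (ξ * ζ) z := by
  have hW := al_W h h1
  by_cases hw : Complex.normSq (W z) < 1
  · have h2 : Complex.normSq (W (al j ζ z)) < 1 := by rw [hW, h.nw]; exact hw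
    rw [al_lt _ _ h2, al_lt j (ξ * ζ) hw, hW, al_lt _ _ hw, Vm_comp (mk_Pr j h1 hw), mul_assoc]
    · exact ee_1 j (by rwa [h.nw])
    · rw [ee_W]; exact W1_ne (by rwa [h.nw])
  · have h2 : ¬ Complex.normSq (W (al j ζ z)) < 1 := by rw [hW, h.nw]; exact hw
    rw [al, if_neg h2, al, if_neg hw, al, if_neg hw, smul_smul, mul_pow]

theorem al_one (j : ℕ) (z : V3) : al j 1 z = z := by
  by_cases hw : Complex.normSq (W z) < 1
  · rw [al_lt _ _ hw, one_mul, Vm_ee _ hw]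
  · rw [al, if_neg hw]; simp

section
variable {E : Type*} [NormedAddCommGroup E] [NormedSpace ℝ E] {f g : E → V3} {x : E}
theorem cda_B (hf : ContDiffAt ℝ ∞ f x) (hg : ContDiffAt ℝ ∞ g x) : ContDiffAt ℝ ∞ (fun y => B (f y) (g y)) x := by
  unfold B; fun_prop
theorem cda_W (hf : ContDiffAt ℝ ∞ f x) : ContDiffAt ℝ ∞ (fun y => W (f y)) x := cda_B hf hf
theorem cda_sh (hf : ContDiffAt ℝ ∞ f x) : ContDiffAt ℝ ∞ (fun y => sh (f y)) x := by
  unfold sh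
  exact (cda_conj hf.snd.fst).prodMk ((cda_conj hf.fst).prodMk (cda_conj hf.snd.snd))
theorem cda_cr (hf : ContDiffAt ℝ ∞ f x) (hg : ContDiffAt ℝ ∞ g x) : ContDiffAt ℝ ∞ (fun y => cr (f y) (g y)) x := by
  unfold cr; fun_prop
theorem cda_Nz (hf : ContDiffAt ℝ ∞ f x) : ContDiffAt ℝ ∞ (fun y => Nz (f y)) x := cda_cr hf (cda_sh hf)
theorem cda_W1 {f : E → ℂ} (hf : ContDiffAt ℝ ∞ f x) : ContDiffAt ℝ ∞ (fun y => W1 (f y)) x := by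
  unfold W1
  exact contDiffAt_const.sub (hf.mul (cda_conj hf))
theorem cda_smul {f : E → ℂ} {g : E → V3} (hf : ContDiffAt ℝ ∞ f x) (hg : ContDiffAt ℝ ∞ g x) :
    ContDiffAt ℝ ∞ (fun y => f y • g y) x := by
  have : (fun y => f y • g y) = fun y => (f y * (g y).1, f y * (g y).2.1, f y * (g y).2.2) := by
    ext y <;> simp
  rw [this]; fun_prop
theorem cda_Vm {e z u : E → V3} (he : ContDiffAt ℝ ∞ e x) (hz : ContDiffAt ℝ ∞ z x) (hu : ContDiffAt ℝ ∞ u x)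
    (hn : W1 (W (e x)) ≠ 0) : ContDiffAt ℝ ∞ (fun y => Vm (e y) (z y) (u y)) x := by
  unfold Vm Pu Qu Ru
  have hD := cda_W1 (cda_W he)
  have hs := cda_sh he
  refine ((cda_smul (cda_div ?_ hD hn) hz).add (cda_smul (cda_div ?_ hD hn) (cda_sh hz))).add
    (cda_smul (cda_div ?_ hD hn) (cda_Nz hz))
  · exact (cda_B hu hs).sub ((cda_conj (cda_W he)).mul (cda_B hu he))
  · exact (cda_B hu he).sub ((cda_W he).mul (cda_B hu hs))
  · exact cda_B hu (cda_Nz he)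
end

theorem cont_W : Continuous W := by unfold W B; fun_prop

theorem al_cd {j : ℕ} {ζ : ℂ} (h : Adm j ζ) : ContDiff ℝ ∞ (al j ζ) := by
  rw [contDiff_iff_contDiffAt]
  intro z
  have hc : Continuous fun z => Complex.normSq (W z) := Complex.continuous_normSq.comp cont_W
  by_cases hw : Complex.normSq (W z) < 1
  · have hev : al j ζ =ᶠ[nhds z] fun z => Vm (ee j (W z)) z (ee j (ζ * W z)) := by
      filter_upwards [(isOpen_lt hc continuous_const).mem_nhds hw] with y hy
      exact al_lt _ _ hy
    refine ContDiffAt.congr_of_eventuallyEq ?_ hev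
    have hWd : ContDiffAt ℝ ∞ W z := cda_W contDiffAt_id
    have h1 : ContDiffAt ℝ ∞ (fun z => ee j (W z)) z := (cd_ee j hw).comp z hWd
    have h2 : ContDiffAt ℝ ∞ (fun z => ee j (ζ * W z)) z :=
      ContDiffAt.comp (g := ee j) z (cd_ee j (by rwa [h.nw])) (contDiffAt_const.mul hWd)
    exact cda_Vm h1 contDiffAt_id h2 (by rw [ee_W]; exact W1_ne hw)
  · have hw' : 3/4 < Complex.normSq (W z) := by linarith
    have hev : al j ζ =ᶠ[nhds z] fun z => ζ ^ (2 * j) • z := by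
      filter_upwards [(isOpen_lt continuous_const hc).mem_nhds hw'] with y hy
      exact al_big h (le_of_lt hy)
    exact ContDiffAt.congr_of_eventuallyEq (cda_smul contDiffAt_const contDiffAt_id) hev

theorem al_small {j : ℕ} {ζ : ℂ} (h : Adm j ζ) {z : V3} (hz : Complex.normSq (W z) < 1/4) :
    al j ζ z = (((1 + ss (W z)) - ζ * (1 - ss (W z))) / (2 * ss (W z))) • z
      + ((ζ - 1) * W z / (2 * ss (W z))) • sh z := by
  have hw : Complex.normSq (W z) < 1 := by linarith
  set w := W z with hwd
  have e1 : ss (ζ * w) = ss w := by rw [ss, h.nw, ss]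
  have e2 : bb (ζ * w) = bb w := by rw [bb, e1, bb]
  have e6 : aa (ζ * w) = ζ * aa w := by rw [aa, e2, aa]; ring
  have hs : (ss w : ℂ) ≠ 0 := by exact_mod_cast (ss_pos hw).ne'
  have hs2 : W1 w = (ss w : ℂ)^2 := by
    rw [W1, Complex.mul_conj]; have := ss_sq hw; exact_mod_cast this.symm
  have hA := aa_sq hw
  have hB : (bb w : ℂ)^2 = ((1 + ss w)/2 : ℝ) := by exact_mod_cast bb_sq w
  push_cast at hA hB
  have hab := ab w
  have habc : 2 * (conj (aa w) * bb w) = conj w := by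
    conv_rhs => rw [← ab w]
    rw [map_mul, map_mul, Complex.conj_ofReal, map_ofNat]
  have hww : w * conj w = 1 - (ss w : ℂ)^2 := by rw [← hs2, W1]; ring
  rw [al_lt _ _ hw, ← hwd]
  have hP : Pu (ee j w) (ee j (ζ * w)) = (((1 + ss w) - ζ * (1 - ss w)) / (2 * ss w)) := by
    rw [Pu, ee_W, hs2, ee_small j hz, ee_small j (by rwa [h.nw]), e2, e6, div_eq_div_iff (pow_ne_zero 2 hs) (by simpa using hs)]
    simp only [B, sh]
    simp
    set s : ℂ := (ss w : ℂ)
    set a := aa w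
    set a' := conj a
    set b : ℂ := (bb w : ℂ)
    linear_combination (2 * s) * hB + 2 * s * ζ * hA - s * (1 + ζ) * conj w * hab - s * (1 + ζ) * hww
  have hQ : Qu (ee j w) (ee j (ζ * w)) = (ζ - 1) * w / (2 * ss w) := by
    rw [Qu, ee_W, hs2, ee_small j hz, ee_small j (by rwa [h.nw]), e2, e6, div_eq_div_iff (pow_ne_zero 2 hs) (by simpa using hs)]
    simp only [B, sh]
    simp
    set s : ℂ := (ss w : ℂ)
    set a := aa w
    set a' := conj a
    set b : ℂ := (bb w : ℂ)
    linear_combination s * (1 + ζ) * hab - 2 * s * w * hB - 2 * s * w * ζ * hA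
  have hR : Ru (ee j w) (ee j (ζ * w)) = 0 := by
    rw [Ru, ee_small j hz, ee_small j (by rwa [h.nw])]
    simp [B, Nz, cr, sh]
  rw [Vm, hP, hQ, hR]; simp
end TCaux

namespace TCaux
open ComplexConjugate
open scoped ContDiff

abbrev Md (l : ℕ) := EuclideanSpace ℝ (Fin (l + 1 + 1 + 1 + 1 + 1 + 1))

def ns (z : V3) : ℝ := Complex.normSq z.1 + Complex.normSq z.2.1 + Complex.normSq z.2.2
theorem B_ns (z : V3) : B z (sh z) = (ns z : ℂ) := by
  simp only [B, sh, ns]; push_cast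
  rw [Complex.mul_conj, Complex.mul_conj, Complex.mul_conj]
theorem ns_smul (a : ℂ) (z : V3) : ns (a • z) = Complex.normSq a * ns z := by
  simp [ns]; ring
theorem ns_nonneg (z : V3) : 0 ≤ ns z := by
  have := Complex.normSq_nonneg z.1
  have := Complex.normSq_nonneg z.2.1
  have := Complex.normSq_nonneg z.2.2
  unfold ns; positivity
theorem ns_eq_zero {z : V3} (h : ns z = 0) : z = 0 := by
  have h1 := Complex.normSq_nonneg z.1
  have h2 := Complex.normSq_nonneg z.2.1
  have h3 := Complex.normSq_nonneg z.2.2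
  unfold ns at h
  ext1
  · exact Complex.normSq_eq_zero.1 (by linarith)
  · ext1
    · exact Complex.normSq_eq_zero.1 (by linarith)
    · exact Complex.normSq_eq_zero.1 (by linarith)

def Z0 : V3 := (1, 0, 0)
theorem W_Z0 : W Z0 = 0 := by simp [W, B, Z0]
theorem ns_Z0 : ns Z0 = 1 := by simp [ns, Z0]

variable {l : ℕ}
noncomputable def Xv (v : Md l) : V3 := (⟨0, v 0⟩, ⟨v 1, v 2⟩, ⟨v 3, v 4⟩)
noncomputable def yv (v : Md l) (i : Fin (l+1)) : ℝ := v i.succ.succ.succ.succ.succ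
noncomputable def qv (v : Md l) : ℝ := ∑ i, yv v i ^ 2
noncomputable def mk (z : V3) (y : Fin (l+1) → ℝ) : Md l :=
  WithLp.toLp 2 (Fin.cons z.1.im (Fin.cons z.2.1.re (Fin.cons z.2.1.im (Fin.cons z.2.2.re (Fin.cons z.2.2.im y)))))

def drop (z : V3) : V3 := (⟨0, z.1.im⟩, z.2.1, z.2.2)
theorem Xv_mk (z : V3) (y : Fin (l+1) → ℝ) : Xv (mk z y) = drop z := rfl
theorem yv_mk (z : V3) (y : Fin (l+1) → ℝ) : yv (mk z y) = y := rfl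
theorem mk_eta (v : Md l) : mk (Xv v) (yv v) = v := by
  ext i
  refine Fin.cases rfl (fun i => ?_) i
  refine Fin.cases rfl (fun i => ?_) i
  refine Fin.cases rfl (fun i => ?_) i
  refine Fin.cases rfl (fun i => ?_) i
  refine Fin.cases rfl (fun i => rfl) i
theorem mk_drop (z : V3) (y : Fin (l+1) → ℝ) : mk (drop z) y = mk z y := rfl
theorem norm_sq_eq (v : Md l) : ‖v‖ ^ 2 = ns (Xv v) + qv v := by
  rw [EuclideanSpace.norm_sq_eq]
  simp only [Fin.sum_univ_succ (n := l+5), Fin.sum_univ_succ (n := l+4), Fin.sum_univ_succ (n := l+3),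
    Fin.sum_univ_succ (n := l+2), Fin.sum_univ_succ (n := l+1), Real.norm_eq_abs, sq_abs]
  simp only [ns, Xv, qv, yv, Complex.normSq_apply]
  have e1 : v (Fin.succ 0) = v 1 := rfl
  have e2 : v (Fin.succ (Fin.succ 0)) = v 2 := rfl
  have e3 : v (Fin.succ (Fin.succ (Fin.succ 0))) = v 3 := rfl
  have e4 : v (Fin.succ (Fin.succ (Fin.succ (Fin.succ 0)))) = v 4 := rfl
  rw [e1, e2, e3, e4]; ring

theorem qv_nonneg (v : Md l) : 0 ≤ qv v := Finset.sum_nonneg fun i _ => sq_nonneg _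
noncomputable def th (v : Md l) : V3 := ((-2 * qv v : ℝ) : ℂ) • Z0 + ((2 * √(1 + qv v) : ℝ) : ℂ) • Xv v
noncomputable def Tv (v : Md l) : V3 := Z0 + (qv v : ℂ) • th v
noncomputable def dl (v : Md l) : ℂ :=
  2 * (th v).2.1 + qv v * (2 * (th v).1 * (th v).2.1 + (th v).2.2 ^ 2)

theorem W_Tv (v : Md l) : W (Tv v) = qv v * dl v := by
  simp [W, B, Tv, dl, Z0]; ring

theorem th_re (v : Md l) : (th v).1.re = - 2 * qv v := by
  simp [th, Z0, Xv]

/-- membership in the sphere -/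
def Sp (v : Md l) : Prop := ns (Xv v) + qv v = 1

theorem ns_th {v : Md l} (h : Sp v) : ns (th v) = 4 := by
  have h1 : √(1 + qv v) ^ 2 = 1 + qv v := Real.sq_sqrt (by have := qv_nonneg v; linarith)
  have h2 : ns (th v) = 4 * qv v ^ 2 + 4 * √(1 + qv v) ^ 2 * ns (Xv v) := by
    simp [ns, th, Z0, Xv, Complex.normSq_apply]; ring
  unfold Sp at h
  rw [h2, h1]
  linear_combination 4 * (1 + qv v) * h

theorem ns_Z0_add (r : ℝ) (z : V3) : ns (Z0 + (r : ℂ) • z) = 1 + 2 * r * z.1.re + r ^ 2 * ns z := by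
  simp [ns, Z0, Complex.normSq_apply]; ring

theorem ns_Tv {v : Md l} (h : Sp v) : ns (Tv v) = 1 := by
  rw [Tv, ns_Z0_add, ns_th h, th_re]; ring

theorem B_Tv {v : Md l} (h : Sp v) : B (Tv v) (sh (Tv v)) = 1 := by
  rw [B_ns, ns_Tv h]; simp

noncomputable def F1 (ζ : ℂ) (v : Md l) : V3 :=
  th v + ((1 - ζ) * qv v * (dl v * conj (dl v)) / (2 * ss (W (Tv v)) * (1 + ss (W (Tv v))))) • Tv v
    + ((ζ - 1) * dl v / (2 * ss (W (Tv v)))) • sh (Tv v)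

open Classical in
noncomputable def tp (j : ℕ) (ζ : ℂ) (v : Md l) : V3 :=
  if Complex.normSq (W (Tv v)) < 1/4 then F1 ζ v else ((qv v)⁻¹ : ℂ) • (al j ζ (Tv v) - Z0)

theorem F1_q {j : ℕ} {ζ : ℂ} (h : Adm j ζ) {v : Md l} (hz : Complex.normSq (W (Tv v)) < 1/4) :
    (qv v : ℂ) • F1 ζ v = al j ζ (Tv v) - Z0 := by
  have hw : Complex.normSq (W (Tv v)) < 1 := by linarith
  rw [al_small h hz, F1]
  have hs := ss_pos hw
  have hww : (qv v : ℂ) * dl v * (qv v * conj (dl v)) = 1 - (ss (W (Tv v)) : ℂ) ^ 2 := by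
    have e : ((qv v : ℂ) * dl v * (qv v * conj (dl v))) = (Complex.normSq (W (Tv v)) : ℂ) := by
      rw [← Complex.mul_conj, W_Tv, map_mul, Complex.conj_ofReal]
    have := ss_sq hw
    rw [e]; exact_mod_cast (by linarith : Complex.normSq (W (Tv v)) = 1 - ss (W (Tv v)) ^ 2)
  rw [W_Tv] at *
  set s := ss (qv v * dl v)
  have hs1 : (s : ℂ) ≠ 0 := by exact_mod_cast hs.ne'
  have hs2 : (1 + s : ℂ) ≠ 0 := by exact_mod_cast (by linarith : (1 + s : ℝ) ≠ 0)
  have e1 : (qv v : ℂ) * ((1 - ζ) * qv v * (dl v * conj (dl v)) / (2 * s * (1 + s))) =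
      ((1 + s) - ζ * (1 - s)) / (2 * s) - 1 := by
    field_simp
    linear_combination (1 - ζ) * hww
  have e2 : (qv v : ℂ) * ((ζ - 1) * dl v / (2 * s)) = (ζ - 1) * (qv v * dl v) / (2 * s) := by ring
  rw [smul_add, smul_add, smul_smul, smul_smul, e1, e2]
  have e3 : Tv v = Z0 + (qv v : ℂ) • th v := rfl
  rw [e3]
  module

theorem tp_q {j : ℕ} {ζ : ℂ} (h : Adm j ζ) {v : Md l} (hq : qv v ≠ 0) :
    tp j ζ v = ((qv v)⁻¹ : ℂ) • (al j ζ (Tv v) - Z0) := by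
  have hq' : (qv v : ℂ) ≠ 0 := by exact_mod_cast hq
  rw [tp]
  split_ifs with h1
  · rw [← F1_q h h1, smul_smul, inv_mul_cancel₀ hq', one_smul]
  · rfl

theorem Tv_0 {v : Md l} (hq : qv v = 0) : Tv v = Z0 := by simp [Tv, hq]

theorem tp_0 (j : ℕ) (ζ : ℂ) {v : Md l} (hq : qv v = 0) :
    tp j ζ v = ((th v).1, ζ * (th v).2.1, (th v).2.2) := by
  rw [tp, Tv_0 hq, W_Z0, if_pos (by simp), F1, Tv_0 hq, W_Z0, hq, dl, hq]
  ext
  · simp [sh, Z0]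
  · simp [sh, Z0, ss]; ring
  · simp [sh, Z0]

theorem q_tp {j : ℕ} {ζ : ℂ} (h : Adm j ζ) (v : Md l) :
    Z0 + (qv v : ℂ) • tp j ζ v = al j ζ (Tv v) := by
  by_cases hq : qv v = 0
  · have := F1_q h (v := v) (by rw [Tv_0 hq, W_Z0]; simp)
    rw [hq, Complex.ofReal_zero, zero_smul] at *
    rw [eq_comm, sub_eq_zero] at this
    rw [this, add_zero]
  · have hq' : (qv v : ℂ) ≠ 0 := by exact_mod_cast hq
    rw [tp_q h hq, smul_smul, mul_inv_cancel₀ hq', one_smul]; abel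

theorem al_Z0 {j : ℕ} {ζ : ℂ} (h : Adm j ζ) : al j ζ Z0 = Z0 := by
  rw [al_small h (by rw [W_Z0]; simp), W_Z0]; simp [ss]

theorem Adm.conj {j : ℕ} {ζ : ℂ} (h : Adm j ζ) : Adm j (conj ζ) :=
  ⟨by rw [Complex.normSq_conj, h.h1], by rw [← map_pow, h.hj]⟩

noncomputable def uu (j : ℕ) (ζ : ℂ) (v : Md l) : ℝ := √(ns (tp j ζ v)) / 2
theorem uu_sq (j : ℕ) (ζ : ℂ) (v : Md l) : ns (tp j ζ v) = 4 * uu j ζ v ^ 2 := by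
  rw [uu, div_pow, Real.sq_sqrt (ns_nonneg _)]; ring
theorem uu_0 {j : ℕ} {ζ : ℂ} (h : Adm j ζ) {v : Md l} (hv : Sp v) (hq : qv v = 0) : uu j ζ v = 1 := by
  have : ns (tp j ζ v) = 4 := by
    rw [tp_0 j ζ hq, ← ns_th hv, ns, ns, map_mul, h.h1, one_mul]
  rw [uu, this, show (4 : ℝ) = 2 ^ 2 by norm_num, Real.sqrt_sq (by norm_num)]; norm_num

theorem ns_tp_pos {j : ℕ} {ζ : ℂ} (h : Adm j ζ) {v : Md l} (hv : Sp v) : 0 < ns (tp j ζ v) := by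
  by_cases hq : qv v = 0
  · rw [uu_sq, uu_0 h hv hq]; norm_num
  · refine lt_of_le_of_ne (ns_nonneg _) fun h0 => ?_
    have h1 := ns_eq_zero h0.symm
    have h2 := q_tp h v
    rw [h1, smul_zero, add_zero] at h2
    have h3 := al_comp (ξ := conj ζ) h (B_Tv hv)
    rw [← h2, al_Z0 h.conj, mul_comm, Complex.mul_conj, h.h1, Complex.ofReal_one, al_one, Tv] at h3
    have h4 : (qv v : ℂ) • th v = 0 := by simpa using h3
    rw [smul_eq_zero] at h4
    rcases h4 with h4 | h4
    · exact hq (by exact_mod_cast h4)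
    · have := ns_th hv
      rw [h4] at this
      simp [ns] at this

theorem uu_pos {j : ℕ} {ζ : ℂ} (h : Adm j ζ) {v : Md l} (hv : Sp v) : 0 < uu j ζ v := by
  have := Real.sqrt_pos.2 (ns_tp_pos h hv)
  unfold uu; positivity

theorem tp_re {j : ℕ} {ζ : ℂ} (h : Adm j ζ) {v : Md l} (hv : Sp v) :
    (tp j ζ v).1.re = - 2 * qv v * uu j ζ v ^ 2 := by
  by_cases hq : qv v = 0
  · rw [tp_0 j ζ hq, hq]; simp [th_re, hq]
  · have h1 := al_1 h (B_Tv hv)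
    rw [← q_tp h v, B_ns, ns_Z0_add, uu_sq] at h1
    have h2 : 1 + 2 * qv v * (tp j ζ v).1.re + qv v ^ 2 * (4 * uu j ζ v ^ 2) = 1 := by exact_mod_cast h1
    have h3 : qv v * ((tp j ζ v).1.re - (- 2 * qv v * uu j ζ v ^ 2)) = 0 := by linarith
    rcases mul_eq_zero.1 h3 with h | h
    · exact absurd h hq
    · linarith

noncomputable def Ps (j : ℕ) (ζ : ℂ) (v : Md l) : Md l :=
  mk (((2 * uu j ζ v * √(1 + uu j ζ v * qv v))⁻¹ : ℝ) • tp j ζ v) (fun i => √(uu j ζ v) * yv v i)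

theorem qv_Ps {j : ℕ} {ζ : ℂ} (h : Adm j ζ) {v : Md l} (hv : Sp v) :
    qv (Ps j ζ v) = uu j ζ v * qv v := by
  have := (uu_pos h hv).le
  rw [Ps, qv, yv_mk, qv, Finset.mul_sum]
  exact Finset.sum_congr rfl fun i _ => by rw [mul_pow, Real.sq_sqrt this]

theorem drop_eq (z : V3) : drop z = z + ((- z.1.re : ℝ) : ℂ) • Z0 := by
  ext1
  · apply Complex.ext <;> simp [drop, Z0]
  · simp [drop, Z0]
theorem drop_smul (r : ℝ) (z : V3) : drop (r • z) = (r : ℂ) • drop z := by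
  ext1
  · apply Complex.ext <;> simp [drop]
  · ext1 <;> simp [drop]

theorem th_Ps {j : ℕ} {ζ : ℂ} (h : Adm j ζ) {v : Md l} (hv : Sp v) :
    th (Ps j ζ v) = (((uu j ζ v)⁻¹ : ℝ) : ℂ) • tp j ζ v := by
  have hu := uu_pos h hv
  have hq := qv_nonneg v
  have hs : 0 < √(1 + uu j ζ v * qv v) := Real.sqrt_pos.2 (by positivity)
  rw [th, qv_Ps h hv, Ps, Xv_mk, drop_smul, drop_eq, tp_re h hv, smul_smul, smul_add, smul_smul]
  have e1 : ((2 * √(1 + uu j ζ v * qv v) : ℝ) : ℂ) * ((2 * uu j ζ v * √(1 + uu j ζ v * qv v))⁻¹ : ℝ) =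
    ((uu j ζ v)⁻¹ : ℝ) := by
    rw [← Complex.ofReal_mul]; congr 1; field_simp
  rw [e1, ← Complex.ofReal_mul]
  have e2 : (uu j ζ v)⁻¹ * -(-2 * qv v * uu j ζ v ^ 2) = - (-2 * (uu j ζ v * qv v)) := by field_simp
  rw [e2]
  push_cast
  module

theorem Sp_Ps {j : ℕ} {ζ : ℂ} (h : Adm j ζ) {v : Md l} (hv : Sp v) : Sp (Ps j ζ v) := by
  have hu := uu_pos h hv
  have hq := qv_nonneg v
  have hs : √(1 + uu j ζ v * qv v) ^ 2 = 1 + uu j ζ v * qv v := Real.sq_sqrt (by positivity)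
  have h0 : 0 < 1 + uu j ζ v * qv v := by positivity
  have hn : ns (drop (tp j ζ v)) = ns (tp j ζ v) - (tp j ζ v).1.re ^ 2 := by
    simp [ns, drop, Complex.normSq_apply]; ring
  rw [Sp, qv_Ps h hv, Ps, Xv_mk, drop_smul, ns_smul, hn, tp_re h hv, uu_sq, Complex.normSq_ofReal]
  rw [← mul_inv, show ∀ a b : ℝ, (2 * a * b) * (2 * a * b) = 4 * a ^ 2 * b ^ 2 by intros; ring, hs]
  field_simp
  ring

theorem Tv_Ps {j : ℕ} {ζ : ℂ} (h : Adm j ζ) {v : Md l} (hv : Sp v) :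
    Tv (Ps j ζ v) = al j ζ (Tv v) := by
  have hu := uu_pos h hv
  rw [Tv, th_Ps h hv, qv_Ps h hv, ← q_tp h v, smul_smul, ← Complex.ofReal_mul]
  congr 3
  field_simp

theorem tp_Ps {j : ℕ} {ζ ξ : ℂ} (h : Adm j ζ) (h' : Adm j ξ) {v : Md l} (hv : Sp v) :
    tp j ξ (Ps j ζ v) = (((uu j ζ v)⁻¹ : ℝ) : ℂ) • tp j (ξ * ζ) v := by
  have hu := uu_pos h hv
  by_cases hq : qv v = 0
  · have hq' : qv (Ps j ζ v) = 0 := by rw [qv_Ps h hv, hq, mul_zero]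
    rw [tp_0 j ξ hq', th_Ps h hv, tp_0 j _ hq, tp_0 j _ hq, uu_0 h hv hq]
    simp [mul_assoc]
  · have hq' : qv (Ps j ζ v) ≠ 0 := by rw [qv_Ps h hv]; positivity
    rw [tp_q h' hq', Tv_Ps h hv, al_comp h (B_Tv hv), tp_q (h'.mul h) hq, smul_smul, qv_Ps h hv]
    congr 1
    push_cast
    rw [mul_inv]

theorem uu_Ps {j : ℕ} {ζ ξ : ℂ} (h : Adm j ζ) (h' : Adm j ξ) {v : Md l} (hv : Sp v) :
    uu j ξ (Ps j ζ v) = uu j (ξ * ζ) v / uu j ζ v := by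
  have hu := uu_pos h hv
  rw [uu, tp_Ps h h' hv, ns_smul, Complex.normSq_ofReal, Real.sqrt_mul (by positivity), Real.sqrt_mul_self (by positivity), uu.eq_1 j (ξ * ζ)]
  field_simp

theorem Ps_Ps {j : ℕ} {ζ ξ : ℂ} (h : Adm j ζ) (h' : Adm j ξ) {v : Md l} (hv : Sp v) :
    Ps j ξ (Ps j ζ v) = Ps j (ξ * ζ) v := by
  have hu := uu_pos h hv
  have hu' := uu_pos (h'.mul h) hv
  have hq := qv_nonneg v
  have hs : 0 < √(1 + uu j (ξ * ζ) v * qv v) := Real.sqrt_pos.2 (by positivity)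
  rw [Ps.eq_1 j ξ (Ps j ζ v), tp_Ps h h' hv, uu_Ps h h' hv, qv_Ps h hv, Ps.eq_1 j (ξ * ζ) v]
  have e0 : uu j (ξ * ζ) v / uu j ζ v * (uu j ζ v * qv v) = uu j (ξ * ζ) v * qv v := by field_simp
  rw [e0]
  congr 1
  · rw [← Complex.coe_smul, ← Complex.coe_smul, smul_smul, ← Complex.ofReal_mul]
    congr 2
    field_simp
  · rw [Ps, yv_mk]
    funext i
    rw [← mul_assoc, ← Real.sqrt_mul (by positivity), div_mul_cancel₀ _ hu.ne']

theorem Ps_of_th {j : ℕ} {ζ : ℂ} {v : Md l} (hv : Sp v) (ht : tp j ζ v = th v) : Ps j ζ v = v := by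
  have h1 : uu j ζ v = 1 := by
    rw [uu, ht, ns_th hv, show (4 : ℝ) = 2 ^ 2 by norm_num, Real.sqrt_sq (by norm_num)]; norm_num
  have hq := qv_nonneg v
  have hs : 0 < √(1 + qv v) := Real.sqrt_pos.2 (by positivity)
  rw [Ps, h1, ht]
  conv_rhs => rw [← mk_eta v]
  rw [← mk_drop]
  congr 1
  rotate_left
  · simp
  rw [drop_smul, drop_eq, th_re]
  have : th v + ((-(-2 * qv v) : ℝ) : ℂ) • Z0 = ((2 * √(1 + qv v) : ℝ) : ℂ) • Xv v := by
    rw [th]; push_cast; module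
  rw [this, smul_smul, ← Complex.ofReal_mul]
  have : (2 * 1 * √(1 + 1 * qv v))⁻¹ * (2 * √(1 + qv v)) = 1 := by
    rw [one_mul]; field_simp
  rw [this]; simp

theorem Ps_one (j : ℕ) {v : Md l} (hv : Sp v) : Ps j 1 v = v := by
  refine Ps_of_th hv ?_
  by_cases hq : qv v = 0
  · rw [tp_0 j _ hq]; simp
  · have hq' : (qv v : ℂ) ≠ 0 := by exact_mod_cast hq
    rw [tp_q (Adm.one j) hq, al_one, Tv, add_sub_cancel_left, smul_smul, inv_mul_cancel₀ hq', one_smul]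
end TCaux

namespace TCaux
open ComplexConjugate
open scoped ContDiff Manifold
variable {l : ℕ}

theorem cd_coord (i) : ContDiff ℝ ∞ (fun v : Md l => v i) := by fun_prop
theorem mk_eq (a b : ℝ) : (⟨a, b⟩ : ℂ) = (a : ℂ) + (b : ℂ) * Complex.I := by
  apply Complex.ext <;> simp
theorem cd_mk {E : Type*} [NormedAddCommGroup E] [NormedSpace ℝ E] {f g : E → ℝ} {x : E}
    (hf : ContDiffAt ℝ ∞ f x) (hg : ContDiffAt ℝ ∞ g x) : ContDiffAt ℝ ∞ (fun y => (⟨f y, g y⟩ : ℂ)) x := by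
  simp only [mk_eq]
  exact (cda_ofReal hf).add ((cda_ofReal hg).mul contDiffAt_const)
theorem cd_Xv (v : Md l) : ContDiffAt ℝ ∞ (Xv : Md l → V3) v := by
  unfold Xv
  have h := fun i => (cd_coord (l := l) i).contDiffAt (x := v)
  exact (cd_mk contDiffAt_const (h 0)).prodMk ((cd_mk (h 1) (h 2)).prodMk (cd_mk (h 3) (h 4)))
theorem cd_yv (v : Md l) (i) : ContDiffAt ℝ ∞ (fun v : Md l => yv v i) v := by
  unfold yv; fun_prop
theorem cd_qv (v : Md l) : ContDiffAt ℝ ∞ (qv : Md l → ℝ) v := by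
  unfold qv
  exact ContDiffAt.sum fun i _ => (cd_yv v i).pow 2
theorem cd_th (v : Md l) : ContDiffAt ℝ ∞ (th : Md l → V3) v := by
  unfold th
  have hq := cd_qv v
  have := qv_nonneg v
  refine (cda_smul (cda_ofReal (contDiffAt_const.mul hq)) contDiffAt_const).add
    (cda_smul (cda_ofReal (contDiffAt_const.mul ((contDiffAt_const.add hq).sqrt (by positivity)))) (cd_Xv v))
theorem cd_Tv (v : Md l) : ContDiffAt ℝ ∞ (Tv : Md l → V3) v := by
  unfold Tv
  exact contDiffAt_const.add (cda_smul (cda_ofReal (cd_qv v)) (cd_th v))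
theorem cd_dl (v : Md l) : ContDiffAt ℝ ∞ (dl : Md l → ℂ) v := by
  unfold dl
  have h := cd_th v
  have hq := cda_ofReal (cd_qv v)
  exact (contDiffAt_const.mul h.snd.fst).add (hq.mul (((contDiffAt_const.mul h.fst).mul h.snd.fst).add (h.snd.snd.pow 2)))
theorem cd_F1 (ζ : ℂ) {v : Md l} (hw : Complex.normSq (W (Tv v)) < 1) : ContDiffAt ℝ ∞ (F1 ζ : Md l → V3) v := by
  unfold F1
  have hT := cd_Tv v
  have hd := cd_dl v
  have hq := cda_ofReal (cd_qv v)
  have hs : ContDiffAt ℝ ∞ (fun v : Md l => (ss (W (Tv v)) : ℂ)) v :=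
    cda_ofReal (ContDiffAt.comp (g := ss) (f := fun v : Md l => W (Tv v)) v (cd_ss hw) (cda_W hT))
  have hp := ss_pos hw
  have n1 : (2 * ss (W (Tv v)) : ℂ) ≠ 0 := by exact_mod_cast (by positivity : (2 * ss (W (Tv v)) : ℝ) ≠ 0)
  have n2 : (2 * ss (W (Tv v)) * (1 + ss (W (Tv v))) : ℂ) ≠ 0 := by
    exact_mod_cast (by positivity : (2 * ss (W (Tv v)) * (1 + ss (W (Tv v))) : ℝ) ≠ 0)
  refine ((cd_th v).add (cda_smul (cda_div ?_ ?_ n2) hT)).add (cda_smul (cda_div ?_ ?_ n1) (cda_sh hT))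
  · exact (contDiffAt_const.mul hq).mul (hd.mul (cda_conj hd))
  · exact (contDiffAt_const.mul hs).mul (contDiffAt_const.add hs)
  · exact contDiffAt_const.mul hd
  · exact contDiffAt_const.mul hs

theorem cont_Tv : Continuous (Tv : Md l → V3) := continuous_iff_continuousAt.2 fun v => (cd_Tv v).continuousAt
theorem cont_qv : Continuous (qv : Md l → ℝ) := continuous_iff_continuousAt.2 fun v => (cd_qv v).continuousAt
theorem cont_th : Continuous (th : Md l → V3) := continuous_iff_continuousAt.2 fun v => (cd_th v).continuousAt

theorem cd_tp {j : ℕ} {ζ : ℂ} (h : Adm j ζ) (v : Md l) : ContDiffAt ℝ ∞ (tp j ζ : Md l → V3) v := by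
  by_cases hq : qv v = 0
  · have h0 : Complex.normSq (W (Tv v)) < 1/4 := by rw [Tv_0 hq, W_Z0]; simp
    have hc : Continuous fun v : Md l => Complex.normSq (W (Tv v)) :=
      Complex.continuous_normSq.comp (cont_W.comp cont_Tv)
    refine (cd_F1 ζ (by linarith)).congr_of_eventuallyEq ?_
    filter_upwards [(isOpen_lt hc continuous_const).mem_nhds h0] with y hy
    exact if_pos hy
  · have hq' : (qv v : ℂ) ≠ 0 := by exact_mod_cast hq
    have : ContDiffAt ℝ ∞ (fun v : Md l => ((qv v)⁻¹ : ℂ) • (al j ζ (Tv v) - Z0)) v :=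
      cda_smul ((cda_ofReal (cd_qv v)).inv hq') (((al_cd h).contDiffAt.comp v (cd_Tv v)).sub contDiffAt_const)
    refine this.congr_of_eventuallyEq ?_
    filter_upwards [(isOpen_ne_fun cont_qv continuous_const).mem_nhds hq] with y hy
    exact tp_q h hy

theorem cda_ns {E : Type*} [NormedAddCommGroup E] [NormedSpace ℝ E] {f : E → V3} {x : E}
    (hf : ContDiffAt ℝ ∞ f x) : ContDiffAt ℝ ∞ (fun y => ns (f y)) x := by
  unfold ns
  exact ((cda_normSq hf.fst).add (cda_normSq hf.snd.fst)).add (cda_normSq hf.snd.snd)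

theorem cda_mk {E : Type*} [NormedAddCommGroup E] [NormedSpace ℝ E] {f : E → V3} {g : E → Fin (l+1) → ℝ} {x : E}
    (hf : ContDiffAt ℝ ∞ f x) (hg : ∀ i, ContDiffAt ℝ ∞ (fun y => g y i) x) :
    ContDiffAt ℝ ∞ (fun y => mk (f y) (g y)) x := by
  rw [contDiffAt_euclidean]
  intro i
  refine Fin.cases (cda_im hf.fst) (fun i => ?_) i
  refine Fin.cases (cda_re hf.snd.fst) (fun i => ?_) i
  refine Fin.cases (cda_im hf.snd.fst) (fun i => ?_) i
  refine Fin.cases (cda_re hf.snd.snd) (fun i => ?_) i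
  refine Fin.cases (cda_im hf.snd.snd) (fun i => hg i) i

theorem cd_Ps {j : ℕ} {ζ : ℂ} (h : Adm j ζ) {v : Md l} (hv : Sp v) : ContDiffAt ℝ ∞ (Ps j ζ : Md l → Md l) v := by
  have ht := cd_tp h v
  have hq := cd_qv v
  have hq0 := qv_nonneg v
  have hu0 := uu_pos h hv
  have hu : ContDiffAt ℝ ∞ (uu j ζ : Md l → ℝ) v := by
    unfold uu
    exact ((cda_ns ht).sqrt (ns_tp_pos h hv).ne').div_const 2
  have hs : 0 < √(1 + uu j ζ v * qv v) := Real.sqrt_pos.2 (by positivity)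
  unfold Ps
  refine cda_mk (ContDiffAt.fun_smul ?_ ht) fun i => (hu.sqrt hu0.ne').mul (cd_yv v i)
  refine ContDiffAt.inv ((contDiffAt_const.mul hu).mul ((contDiffAt_const.add (hu.mul hq)).sqrt ?_)) ?_
  · positivity
  · positivity

theorem Sp_iff (v : Md l) : Sp v ↔ v ∈ Metric.sphere (0 : Md l) 1 := by
  rw [mem_sphere_zero_iff_norm, Sp, ← norm_sq_eq]
  have := norm_nonneg v
  constructor
  · intro h; nlinarith
  · intro h; rw [h]; norm_num

noncomputable def actS (j : ℕ) {P : Type*} (ζ : P → ℂ) (hζ : ∀ k, Adm j (ζ k)) (k : P) (v : Metric.sphere (0 : Md l) 1) :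
    Metric.sphere (0 : Md l) 1 :=
  ⟨Ps j (ζ k) v, (Sp_iff _).1 (Sp_Ps (hζ k) ((Sp_iff _).2 v.2))⟩

instance factMd : Fact (Module.finrank ℝ (Md l) = l + 3 + 2 + 1) := ⟨by simp⟩

theorem actS_cd (j : ℕ) {P : Type*} (ζ : P → ℂ) (hζ : ∀ k, Adm j (ζ k)) (k : P) :
    ContMDiff (𝓡 (l + 3 + 2)) (𝓡 (l + 3 + 2)) (⊤ : ℕ∞) (actS (l := l) j ζ hζ k) := by
  have h1 : ContMDiff (𝓡 (l + 3 + 2)) 𝓘(ℝ, Md l) (⊤ : ℕ∞) (fun v : Metric.sphere (0 : Md l) 1 => Ps j (ζ k) (v : Md l)) := by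
    intro v
    have h2 : ContMDiffAt 𝓘(ℝ, Md l) 𝓘(ℝ, Md l) (⊤ : ℕ∞) (Ps j (ζ k)) (v : Md l) :=
      (cd_Ps (hζ k) ((Sp_iff _).2 v.2)).contMDiffAt
    exact h2.comp v (contMDiff_coe_sphere v)
  exact h1.codRestrict_sphere (fun v => (Sp_iff _).1 (Sp_Ps (hζ k) ((Sp_iff _).2 v.2)))
end TCaux

namespace TCaux
open ComplexConjugate
open scoped ContDiff Manifold
variable {l : ℕ}

theorem Ps_fix {j : ℕ} {ζ : ℂ} (h : Adm j ζ) (h1 : ζ ≠ 1) {v : Md l} (hv : Sp v) (hf : Ps j ζ v = v) : dl v = 0 := by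
  have hT := Tv_Ps h hv
  rw [hf] at hT
  have hW := al_W h (B_Tv hv)
  rw [← hT] at hW
  have hW0 : W (Tv v) = 0 := by
    have : (ζ - 1) * W (Tv v) = 0 := by linear_combination - hW
    exact (mul_eq_zero.1 this).resolve_left (sub_ne_zero.2 h1)
  rw [W_Tv] at hW0
  rcases mul_eq_zero.1 hW0 with hq | hd
  · have hq : qv v = 0 := by exact_mod_cast hq
    have ht := th_Ps h hv
    rw [hf, uu_0 h hv hq, tp_0 _ _ hq] at ht
    have h2 := congrArg (fun z : V3 => z.2.1) ht
    simp at h2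
    have h3 : (ζ - 1) * (th v).2.1 = 0 := by linear_combination - h2
    have h4 := (mul_eq_zero.1 h3).resolve_left (sub_ne_zero.2 h1)
    simp [dl, hq, h4]
  · exact hd

theorem Ps_fix' {j : ℕ} {ζ : ℂ} {v : Md l} (hv : Sp v) (hd : dl v = 0) : Ps j ζ v = v := by
  apply Ps_of_th hv
  rw [tp, W_Tv, hd, mul_zero, if_pos (by simp), F1, hd]
  simp

theorem ext_th {a b : Md l} (h1 : th a = th b) (h2 : yv a = yv b) : a = b := by
  have hq : qv a = qv b := by rw [qv, h2, qv]
  rw [← mk_eta a, ← mk_eta b, h2]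
  congr 1
  rw [th, th, hq] at h1
  have h3 := add_left_cancel h1
  have : ((2 * √(1 + qv b) : ℝ) : ℂ) ≠ 0 := by
    have := qv_nonneg b
    exact_mod_cast (by positivity : (2 * √(1 + qv b) : ℝ) ≠ 0)
  exact smul_right_injective _ this h3

abbrev E3 := EuclideanSpace ℝ (Fin 3)
noncomputable def wr (r : E3) : ℂ := ⟨r 1, r 2⟩
noncomputable def Nr (r : E3) : ℝ := √(2 * (1 + r 0 ^ 2))
noncomputable def Yr (c s : ℝ) (r : E3) : V3 :=
  (⟨-s * (1 + r 0 ^ 2), 2 * c * r 0⟩, s * wr r ^ 2, sq2 * ⟨c, s * r 0⟩ * wr r)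
noncomputable def qr (s : ℝ) (r : E3) : ℝ := s * Nr r / 2
noncomputable def Gm (c s : ℝ) (r : E3) (y : Fin (l+1) → ℝ) : Md l :=
  mk (((2 * √(1 + qr s r))⁻¹ * (2 / Nr r) : ℝ) • Yr c s r) (fun i => √(qr s r) * y i)
noncomputable def cov (a b : ℂ) : V3 := (a ^ 2, b ^ 2, sq2 * a * b)

theorem Nr_pos (r : E3) : 0 < Nr r := Real.sqrt_pos.2 (by positivity)
theorem Nr_sq (r : E3) : Nr r ^ 2 = 2 * (1 + r 0 ^ 2) := Real.sq_sqrt (by positivity)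
theorem normSq_sq2 : Complex.normSq sq2 = 2 := by simp [sq2]
theorem ns_cov (a b : ℂ) : ns (cov a b) = (Complex.normSq a + Complex.normSq b) ^ 2 := by
  simp [ns, cov, normSq_sq2]; ring
theorem W_cov (a b : ℂ) : W (cov a b) = 0 := by
  simp only [W, B, cov]; linear_combination (a * b)^2 * sq2_sq
theorem Yr_eq (c s : ℝ) (hcs : c ^ 2 + s ^ 2 = 1) (r : E3) :
    Z0 + (s : ℂ) • Yr c s r = cov ⟨c, s * r 0⟩ (s * wr r) := by
  ext1
  · apply Complex.ext
    · simp [Z0, Yr, cov, pow_two]; linear_combination - hcs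
    · simp [Z0, Yr, cov, pow_two]; ring
  · ext1 <;> simp [Z0, Yr, cov] <;> ring
theorem ns_Yr (c s : ℝ) (hcs : c ^ 2 + s ^ 2 = 1) (r : E3) (hr : r 0 ^ 2 + Complex.normSq (wr r) = 1) :
    ns (Yr c s r) = Nr r ^ 2 := by
  have : Complex.normSq (wr r) = 1 - r 0 ^ 2 := by linarith
  have h2 : s ^ 2 = 1 - c ^ 2 := by linarith
  rw [Nr_sq]
  simp only [ns, Yr, map_mul, map_pow, Complex.normSq_ofReal, normSq_sq2, this, Complex.normSq_mk]
  linear_combination (2 + 2 * r 0 ^ 2) * hcs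

variable {c s : ℝ} {r : E3} {y : Fin (l+1) → ℝ}
theorem qr_nonneg (hs : 0 ≤ s) (r : E3) : 0 ≤ qr s r := by
  have := Nr_pos r
  unfold qr; positivity
theorem qv_Gm (hs : 0 ≤ s) (hy : ∑ i, y i ^ 2 = 1) : qv (Gm c s r y) = qr s r := by
  rw [Gm, qv, yv_mk]
  simp only [mul_pow, Real.sq_sqrt (qr_nonneg hs r)]
  rw [← Finset.mul_sum, hy, mul_one]
theorem th_Gm (hs : 0 ≤ s) (hy : ∑ i, y i ^ 2 = 1) : th (Gm c s r y) = ((2 / Nr r : ℝ) : ℂ) • Yr c s r := by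
  have hN := Nr_pos r
  have hq := qr_nonneg hs r
  rw [th, qv_Gm hs hy, Gm, Xv_mk, drop_smul, smul_smul, drop_eq, smul_add, smul_smul]
  have e1 : ((2 * √(1 + qr s r) : ℝ) : ℂ) * (((2 * √(1 + qr s r))⁻¹ * (2 / Nr r) : ℝ) : ℂ) = ((2 / Nr r : ℝ) : ℂ) := by
    rw [← Complex.ofReal_mul]; congr 1
    have : (2 * √(1 + qr s r)) ≠ 0 := by positivity
    field_simp
  rw [e1]
  have e2 : ((2 / Nr r : ℝ) : ℂ) * ((-(Yr c s r).1.re : ℝ) : ℂ) = - ((-2 * qr s r : ℝ) : ℂ) := by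
    rw [← Complex.ofReal_mul, ← Complex.ofReal_neg]; congr 1
    simp only [Yr, qr]
    have := Nr_sq r
    field_simp
    linear_combination (-s) * this
  rw [e2, neg_smul]
  abel
theorem Sp_Gm (hcs : c ^ 2 + s ^ 2 = 1) (hs : 0 ≤ s) (hr : r 0 ^ 2 + Complex.normSq (wr r) = 1)
    (hy : ∑ i, y i ^ 2 = 1) : Sp (Gm c s r y) := by
  have h1 : ns (th (Gm c s r y)) = 4 := by
    rw [th_Gm hs hy, ns_smul, ns_Yr c s hcs r hr, Complex.normSq_ofReal]
    have := Nr_pos r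
    field_simp; norm_num
  set v := Gm c s r y
  have h2 : ns (th v) = 4 * qv v ^ 2 + 4 * (1 + qv v) * ns (Xv v) := by
    have := qv_nonneg v
    have h3 : √(1 + qv v) ^ 2 = 1 + qv v := Real.sq_sqrt (by positivity)
    rw [← h3]
    simp [ns, th, Z0, Xv, Complex.normSq_apply]
    ring
  rw [Sp]
  rw [h1] at h2
  have := qv_nonneg v
  have h4 : (1 + qv v) * (ns (Xv v) + qv v - 1) = 0 := by linarith
  rcases mul_eq_zero.1 h4 with h | h <;> linarith
theorem Tv_Gm (hcs : c ^ 2 + s ^ 2 = 1) (hs : 0 ≤ s) (hy : ∑ i, y i ^ 2 = 1) :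
    Tv (Gm c s r y) = cov ⟨c, s * r 0⟩ (s * wr r) := by
  rw [← Yr_eq c s hcs, Tv, th_Gm hs hy, qv_Gm hs hy, smul_smul, ← Complex.ofReal_mul]
  congr 3
  have := Nr_pos r
  unfold qr; field_simp
theorem dl_Gm (hcs : c ^ 2 + s ^ 2 = 1) (hs : 0 ≤ s) (hy : ∑ i, y i ^ 2 = 1) : dl (Gm c s r y) = 0 := by
  have hN := Nr_pos r
  have hN' : (Nr r : ℂ) ≠ 0 := by exact_mod_cast hN.ne'
  have h1 := congrArg (fun z : V3 => z.1) (Yr_eq c s hcs r)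
  simp [Z0, cov] at h1
  rw [dl, th_Gm hs hy, qv_Gm hs hy]
  simp only [Prod.smul_fst, Prod.smul_snd, smul_eq_mul, qr]
  have h2 : (Yr c s r).2.1 = s * wr r ^ 2 := rfl
  have h3 : (Yr c s r).2.2 = sq2 * ⟨c, s * r 0⟩ * wr r := rfl
  rw [h2, h3]
  push_cast
  field_simp
  linear_combination (4 : ℂ) * s * wr r ^ 2 * h1 + 2 * s * (⟨c, s * r 0⟩ * wr r) ^ 2 * sq2_sq
end TCaux

namespace TCaux
open ComplexConjugate
open scoped ContDiff Manifold
variable {l : ℕ}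

theorem cov_neg (a b : ℂ) : cov (-a) (-b) = cov a b := by simp [cov]
theorem sq2_ne : sq2 ≠ 0 := by
  intro h; have := sq2_sq; rw [h] at this; norm_num at this

theorem cov_surj0 {z : V3} (hW : W z = 0) : ∃ a b, cov a b = z := by
  obtain ⟨z1, z2, z3⟩ := z
  have hW' : 2 * z1 * z2 + z3 ^ 2 = 0 := by
    simp only [W, B] at hW; linear_combination hW
  obtain ⟨a, ha⟩ := IsAlgClosed.exists_pow_nat_eq z1 (n := 2) (by norm_num)
  by_cases h0 : a = 0
  · subst h0
    have hz1 : z1 = 0 := by rw [← ha]; norm_num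
    subst hz1
    have hz3 : z3 = 0 := by
      have : z3 ^ 2 = 0 := by linear_combination hW'
      exact pow_eq_zero_iff (two_ne_zero) |>.1 this
    obtain ⟨b, hb⟩ := IsAlgClosed.exists_pow_nat_eq z2 (n := 2) (by norm_num)
    exact ⟨0, b, by simp [cov, hb, hz3]⟩
  · refine ⟨a, z3 / (sq2 * a), ?_⟩
    have h2 := sq2_ne
    ext1
    · exact ha
    · ext1
      · simp only [cov]
        rw [div_pow, mul_pow, sq2_sq, ha]
        have : z1 ≠ 0 := by rw [← ha]; exact pow_ne_zero 2 h0
        field_simp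
        linear_combination - hW'
      · simp only [cov]; field_simp

theorem cov_surj {z : V3} (hW : W z = 0) (hn : ns z = 1) :
    ∃ a b, Complex.normSq a + Complex.normSq b = 1 ∧ 0 ≤ a.re ∧ cov a b = z := by
  obtain ⟨a, b, rfl⟩ := cov_surj0 hW
  rw [ns_cov] at hn
  have h1 : Complex.normSq a + Complex.normSq b = 1 := by
    have := Complex.normSq_nonneg a
    have := Complex.normSq_nonneg b
    nlinarith
  rcases le_total 0 a.re with h | h
  · exact ⟨a, b, h1, h, rfl⟩
  · exact ⟨-a, -b, by simpa using h1, by simpa using h, cov_neg a b⟩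

theorem cov_inj {a b a' b' : ℂ} (h : cov a b = cov a' b') : (a = a' ∧ b = b') ∨ (a = -a' ∧ b = -b') := by
  have h1 : a ^ 2 = a' ^ 2 := congrArg (fun z : V3 => z.1) h
  have h2 : b ^ 2 = b' ^ 2 := congrArg (fun z : V3 => z.2.1) h
  have h3 : sq2 * a * b = sq2 * a' * b' := congrArg (fun z : V3 => z.2.2) h
  have h4 : a * b = a' * b' := by
    apply mul_left_cancel₀ sq2_ne; linear_combination h3
  rcases sq_eq_sq_iff_eq_or_eq_neg.1 h1 with rfl | rfl
  · by_cases ha : a = 0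
    · subst ha
      rcases sq_eq_sq_iff_eq_or_eq_neg.1 h2 with rfl | rfl <;> simp
    · left; exact ⟨rfl, mul_left_cancel₀ ha h4⟩
  · by_cases ha : a' = 0
    · subst ha
      rcases sq_eq_sq_iff_eq_or_eq_neg.1 h2 with rfl | rfl <;> simp
    · right; refine ⟨rfl, mul_left_cancel₀ ha ?_⟩
      linear_combination - h4

theorem exists_y (v : Md l) : ∃ y : Fin (l+1) → ℝ, ∑ i, y i ^ 2 = 1 ∧ ∀ i, √(qv v) * y i = yv v i := by
  by_cases hq : qv v = 0
  · refine ⟨fun i => if i = 0 then 1 else 0, by simp, fun i => ?_⟩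
    have : ∀ i ∈ Finset.univ, yv v i ^ 2 = 0 := (Finset.sum_eq_zero_iff_of_nonneg fun i _ => sq_nonneg _).1 hq
    have := this i (Finset.mem_univ i)
    rw [hq, pow_eq_zero_iff two_ne_zero |>.1 this]; simp
  · have hq' : 0 < qv v := lt_of_le_of_ne (qv_nonneg v) (Ne.symm hq)
    have := Real.sqrt_pos.2 hq'
    refine ⟨fun i => yv v i / √(qv v), ?_, fun i => by field_simp⟩
    simp only [div_pow, Real.sq_sqrt hq'.le]
    rw [← Finset.sum_div]
    exact div_self hq

theorem Gm_surj {v : Md l} (hv : Sp v) (hd : dl v = 0) : ∃ (c s : ℝ) (r : E3) (y : Fin (l+1) → ℝ),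
    c ^ 2 + s ^ 2 = 1 ∧ 0 ≤ c ∧ 0 ≤ s ∧ r 0 ^ 2 + Complex.normSq (wr r) = 1 ∧ ∑ i, y i ^ 2 = 1 ∧ Gm c s r y = v := by
  obtain ⟨y, hy, hyv⟩ := exists_y v
  have hth := ns_th hv
  by_cases hq : qv v = 0
  · have hb : (th v).2.1 = 0 := by simpa [dl, hq] using hd
    have ha := th_re v
    rw [hq] at ha
    set m := (th v).1.im with hm
    have hA : (th v).1 = ⟨0, m⟩ := Complex.ext (by simpa using ha) rfl
    have hns : m ^ 2 + Complex.normSq (th v).2.2 = 4 := by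
      rw [ns, hb, hA] at hth; simp [Complex.normSq_mk] at hth; nlinarith
    have hm4 : m ^ 2 ≤ 4 := by have := Complex.normSq_nonneg (th v).2.2; linarith
    have hpos : 0 < 8 - m ^ 2 := by linarith
    set k := √(8 - m ^ 2) with hk
    have hk0 : 0 < k := Real.sqrt_pos.2 hpos
    have hk2 : k ^ 2 = 8 - m ^ 2 := Real.sq_sqrt hpos.le
    set w : ℂ := ((2 / k : ℝ) : ℂ) * ((th v).2.2 / sq2) with hw
    let r : E3 := !₂[m / k, w.re, w.im]
    have hwr : wr r = w := by apply Complex.ext <;> simp [wr, r]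
    have hr0 : r 0 = m / k := by simp [r]
    have hN : Nr r = 4 / k := by
      have : 2 * (1 + r 0 ^ 2) = (4 / k) ^ 2 := by
        rw [hr0]; field_simp; linarith
      rw [Nr, this, Real.sqrt_sq (by positivity)]
    refine ⟨1, 0, r, y, by norm_num, by norm_num, le_rfl, ?_, hy, ?_⟩
    · rw [hwr, hr0, hw]
      simp only [map_mul, Complex.normSq_ofReal, Complex.normSq_div, normSq_sq2]
      field_simp
      linarith
    · apply ext_th
      · rw [th_Gm le_rfl hy, hN]
        have hkc : (k : ℂ) ≠ 0 := by exact_mod_cast hk0.ne'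
        ext1
        · rw [hA]
          apply Complex.ext
          · rw [Prod.smul_fst, smul_eq_mul, Complex.re_ofReal_mul]; simp [Yr]
          · rw [Prod.smul_fst, smul_eq_mul, Complex.im_ofReal_mul]; simp [Yr, hr0]; field_simp; ring
        · ext1
          · simp [Yr, hb]
          · have h2 := sq2_ne
            have h1 : (⟨1, 0⟩ : ℂ) = 1 := rfl
            simp [Yr, hwr, h1, hw]
            field_simp; norm_num
      · funext i
        rw [← hyv i, hq]
        simp [Gm, yv_mk, qr]
  · have hq' : 0 < qv v := lt_of_le_of_ne (qv_nonneg v) (Ne.symm hq)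
    have hW : W (Tv v) = 0 := by rw [W_Tv, hd, mul_zero]
    obtain ⟨a, b, hab, ha, hc⟩ := cov_surj hW (ns_Tv hv)
    have hab' : a.re ^ 2 + a.im ^ 2 + Complex.normSq b = 1 := by
      rw [Complex.normSq_apply a] at hab; linarith
    have hb0 := Complex.normSq_nonneg b
    have hs2 : 0 < 1 - a.re ^ 2 := by
      by_contra hcon
      have h1 : a.re ^ 2 = 1 := by nlinarith
      have h2 : a.im = 0 := by nlinarith
      have h3 : b = 0 := Complex.normSq_eq_zero.1 (by nlinarith)
      have h4 : Tv v = Z0 := by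
        rw [← hc, h3]
        have : a ^ 2 = 1 := by
          apply Complex.ext <;> simp [pow_two, h2]; nlinarith
        simp [cov, this, Z0]
      have h5 : (qv v : ℂ) • th v = 0 := by
        rw [Tv] at h4; exact add_eq_left.1 h4
      have h6 := ns_smul (qv v) (th v)
      rw [h5, hth, Complex.normSq_ofReal] at h6
      have : ns 0 = 0 := by simp [ns]
      nlinarith
    set s := √(1 - a.re ^ 2) with hsd
    have hs0 : 0 < s := Real.sqrt_pos.2 hs2
    have hss : s ^ 2 = 1 - a.re ^ 2 := Real.sq_sqrt hs2.le
    let r : E3 := !₂[a.im / s, b.re / s, b.im / s]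
    have hr0 : r 0 = a.im / s := by simp [r]
    have hsc : (s : ℂ) ≠ 0 := by exact_mod_cast hs0.ne'
    have hwr : wr r = b / s := by apply Complex.ext <;> simp [wr, r]
    have hcs : a.re ^ 2 + s ^ 2 = 1 := by linarith
    have hT : Tv (Gm a.re s r y) = Tv v := by
      rw [Tv_Gm hcs hs0.le hy, ← hc, hr0, hwr]
      congr 1
      · apply Complex.ext <;> simp; field_simp
      · field_simp
    have hr : r 0 ^ 2 + Complex.normSq (wr r) = 1 := by
      rw [hr0, hwr, Complex.normSq_div, Complex.normSq_ofReal]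
      field_simp; linarith
    have hS := Sp_Gm (y := y) hcs hs0.le hr hy
    refine ⟨a.re, s, r, y, hcs, ha, hs0.le, hr, hy, ?_⟩
    set u := Gm a.re s r y with hu
    have h1 : (qv u : ℂ) • th u = (qv v : ℂ) • th v := by
      rw [Tv, Tv] at hT; exact add_left_cancel hT
    have h2 : qv u = qv v := by
      have h3 := congrArg ns h1
      rw [ns_smul, ns_smul, ns_th hS, hth, Complex.normSq_ofReal, Complex.normSq_ofReal] at h3
      have := qv_nonneg u
      nlinarith
    have hqc : (qv v : ℂ) ≠ 0 := by exact_mod_cast hq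
    apply ext_th
    · rw [h2] at h1
      exact smul_right_injective _ hqc h1
    · funext i
      rw [← hyv i, ← h2, hu, qv_Gm hs0.le hy]
      simp [Gm, yv_mk]
end TCaux

namespace TCaux
open ComplexConjugate
open scoped ContDiff Manifold
variable {l : ℕ}

theorem cont_mk {E : Type*} [TopologicalSpace E] {f : E → V3} {g : E → Fin (l+1) → ℝ}
    (hf : Continuous f) (hg : ∀ i, Continuous fun y => g y i) : Continuous fun y => (mk (f y) (g y) : Md l) := by
  refine (PiLp.continuous_toLp 2 _).comp (continuous_pi fun i => ?_)
  have h1 := Complex.continuous_im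
  have h2 := Complex.continuous_re
  refine Fin.cases (h1.comp hf.fst) (fun i => ?_) i
  refine Fin.cases (h2.comp hf.snd.fst) (fun i => ?_) i
  refine Fin.cases (h1.comp hf.snd.fst) (fun i => ?_) i
  refine Fin.cases (h2.comp hf.snd.snd) (fun i => ?_) i
  refine Fin.cases (h1.comp hf.snd.snd) (fun i => hg i) i

theorem cont_cmk {E : Type*} [TopologicalSpace E] {f g : E → ℝ}
    (hf : Continuous f) (hg : Continuous g) : Continuous fun y => (⟨f y, g y⟩ : ℂ) := by
  simp only [mk_eq]; fun_prop
theorem cont_wr : Continuous wr := by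
  unfold wr
  exact cont_cmk (by fun_prop) (by fun_prop)
theorem cont_Nr : Continuous Nr := by unfold Nr; fun_prop

theorem cont_Gm {E : Type*} [TopologicalSpace E] {c s : E → ℝ} {r : E → E3} (hc : Continuous c) (hs : Continuous s)
    (hr : Continuous r) (h0 : ∀ x, 0 ≤ s x) (y : Fin (l+1) → ℝ) :
    Continuous (fun p => (Gm (c p) (s p) (r p) y : Md l)) := by
  have hw := cont_wr.comp hr
  have hN : Continuous fun p => Nr (r p) := cont_Nr.comp hr
  have hr0 : Continuous fun p => r p 0 := by fun_prop
  have hq : Continuous (fun p => qr (s p) (r p)) := by unfold qr; fun_prop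
  have hY : Continuous (fun p => Yr (c p) (s p) (r p)) := by
    unfold Yr
    refine (cont_cmk (by fun_prop) (by fun_prop)).prodMk
      (Continuous.prodMk ((Complex.continuous_ofReal.comp hs).mul (hw.pow 2)) ?_)
    exact (continuous_const.mul (cont_cmk (by fun_prop) (by fun_prop))).mul hw
  unfold Gm
  refine cont_mk (Continuous.smul (Continuous.mul (Continuous.inv₀ (by fun_prop) fun p => ?_)
    (continuous_const.div hN fun p => (Nr_pos _).ne')) hY) (fun i => by fun_prop)
  have := qr_nonneg (h0 p) (r p)
  positivity

theorem E3_iff (r : E3) : r ∈ Metric.sphere (0 : E3) 1 ↔ r 0 ^ 2 + Complex.normSq (wr r) = 1 := by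
  have h : ‖r‖ ^ 2 = r 0 ^ 2 + Complex.normSq (wr r) := by
    rw [EuclideanSpace.norm_sq_eq, Fin.sum_univ_three, wr, Complex.normSq_mk]; simp; ring
  rw [mem_sphere_zero_iff_norm, ← h]
  have := norm_nonneg r
  constructor
  · intro h; rw [h]; norm_num
  · intro h; nlinarith

def Fx (l : ℕ) : Set (Md l) := {v | Sp v ∧ dl v = 0}

theorem Gm_zero (r : E3) (y y' : Fin (l+1) → ℝ) : (Gm 1 0 r y : Md l) = Gm 1 0 r y' := by
  simp [Gm, qr]

theorem Fx_pc : IsPathConnected (Fx l) := by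
  let r0 : E3 := !₂[1, 0, 0]
  let y0 : Fin (l+1) → ℝ := fun i => if i = 0 then 1 else 0
  have hr0 : r0 ∈ Metric.sphere (0 : E3) 1 := by
    rw [E3_iff]; simp [r0, wr, Complex.normSq_mk]
  have hy0 : ∑ i, y0 i ^ 2 = 1 := by simp [y0]
  have hS : IsPathConnected (Metric.sphere (0 : E3) 1) :=
    isPathConnected_sphere (by rw [← Module.finrank_eq_rank]; simp) 0 zero_le_one
  have hmem : ∀ (c s : ℝ) (r : E3) (y : Fin (l+1) → ℝ), c ^ 2 + s ^ 2 = 1 → 0 ≤ s →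
      r ∈ Metric.sphere (0 : E3) 1 → ∑ i, y i ^ 2 = 1 → (Gm c s r y : Md l) ∈ Fx l := by
    intro c s r y h1 h2 h3 h4
    exact ⟨Sp_Gm h1 h2 ((E3_iff r).1 h3) h4, dl_Gm h1 h2 h4⟩
  refine ⟨Gm 1 0 r0 y0, hmem _ _ _ _ (by norm_num) le_rfl hr0 hy0, ?_⟩
  rintro v ⟨hv, hd⟩
  obtain ⟨c, s, r, y, hcs, hc, hs, hr, hy, rfl⟩ := Gm_surj hv hd
  have hpc : IsPathConnected ((fun p : ℝ × E3 => (Gm (Real.cos p.1) |Real.sin p.1| p.2 y : Md l)) ''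
      (Set.univ ×ˢ Metric.sphere (0 : E3) 1)) :=
    (isPathConnected_univ.prod hS).image
      (cont_Gm (by fun_prop) (by fun_prop) (by fun_prop) (fun x => abs_nonneg _) y)
  have hsub : ((fun p : ℝ × E3 => (Gm (Real.cos p.1) |Real.sin p.1| p.2 y : Md l)) ''
      (Set.univ ×ˢ Metric.sphere (0 : E3) 1)) ⊆ Fx l := by
    rintro _ ⟨⟨t, r⟩, ⟨-, hr⟩, rfl⟩
    exact hmem _ _ _ _ (by simp) (abs_nonneg _) hr hy
  refine (hpc.joinedIn _ ?_ _ ?_).mono hsub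
  · refine ⟨(0, r0), ⟨trivial, hr0⟩, ?_⟩
    simp only [Real.cos_zero, Real.sin_zero, abs_zero]
    exact Gm_zero _ _ _
  · refine ⟨(Real.arcsin s, r), ⟨trivial, (E3_iff r).2 hr⟩, ?_⟩
    have h1 : s ≤ 1 := by nlinarith
    simp only
    rw [Real.sin_arcsin (by linarith) h1, Real.cos_arcsin, abs_of_nonneg hs,
      show 1 - s ^ 2 = c ^ 2 by linarith, Real.sqrt_sq hc]
end TCaux

namespace TCaux
open ComplexConjugate Topology unitInterval

def Sc : SubMulAction ℤˣ (ℂ × ℂ) where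
  carrier := {e | Complex.normSq e.1 + Complex.normSq e.2 = 1}
  smul_mem' := by
    intro u e he
    rcases Int.units_eq_one_or u with rfl | rfl
    · simpa using he
    · simpa using he

theorem mem_Sc (e : ℂ × ℂ) : e ∈ Sc ↔ Complex.normSq e.1 + Complex.normSq e.2 = 1 := Iff.rfl

def Fb : Set V3 := {z | W z = 0 ∧ ns z = 1}

noncomputable def pc (e : Sc) : Fb := ⟨cov e.1.1 e.1.2, W_cov _ _, by rw [ns_cov, e.2]; norm_num⟩

theorem pc_cont : Continuous pc := by
  unfold pc cov
  apply Continuous.subtype_mk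
  fun_prop

instance : CompactSpace Sc := by
  apply (isCompact_iff_compactSpace (s := (Sc : Set (ℂ × ℂ)))).1
  apply Metric.isCompact_of_isClosed_isBounded
  · exact isClosed_eq (by fun_prop) continuous_const
  · refine Metric.isBounded_closedBall (x := (0 : ℂ × ℂ)) (r := 1) |>.subset ?_
    intro e he
    have he : Complex.normSq e.1 + Complex.normSq e.2 = 1 := he
    rw [Complex.normSq_eq_norm_sq, Complex.normSq_eq_norm_sq] at he
    rw [mem_closedBall_zero_iff, Prod.norm_def]
    apply max_le <;> nlinarith [norm_nonneg e.1, norm_nonneg e.2]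

theorem pc_surj : Function.Surjective pc := by
  rintro ⟨z, hW, hn⟩
  obtain ⟨a, b, h1, -, h2⟩ := cov_surj hW hn
  exact ⟨⟨(a, b), h1⟩, Subtype.ext h2⟩

theorem pc_eq {e e' : Sc} (h : pc e = pc e') : e = e' ∨ e = (-1 : ℤˣ) • e' := by
  have := cov_inj (congrArg Subtype.val h)
  rcases this with ⟨h1, h2⟩ | ⟨h1, h2⟩
  · left; exact Subtype.ext (Prod.ext h1 h2)
  · right; apply Subtype.ext
    rw [SubMulAction.val_smul]
    ext1 <;> simp [h1, h2]

theorem val_neg (e : Sc) : (((-1 : ℤˣ) • e : Sc) : ℂ × ℂ) = - (e : ℂ × ℂ) := by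
  rw [SubMulAction.val_smul]; simp

theorem pc_neg (e : Sc) : pc ((-1 : ℤˣ) • e) = pc e := by
  apply Subtype.ext
  simp only [pc, val_neg]
  exact cov_neg _ _

theorem cont_neg : Continuous fun e : Sc => (-1 : ℤˣ) • e := by
  refine Continuous.subtype_mk (f := fun e : Sc => ((-1 : ℤˣ) • (e : ℂ × ℂ))) ?_ _
  simp only [Units.neg_smul, one_smul]
  fun_prop

theorem pc_cov : IsCoveringMap pc := by
  have : IsQuotientCoveringMap pc ℤˣ :=
    { toIsQuotientMap := pc_cont.isClosedMap.isQuotientMap pc_cont pc_surj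
      continuous_const_smul := by
        intro u
        rcases Int.units_eq_one_or u with rfl | rfl
        · simpa using continuous_id'
        · exact cont_neg
      apply_eq_iff_mem_orbit := by
        intro e e'
        constructor
        · intro h
          rcases pc_eq h with rfl | rfl
          · exact MulAction.mem_orbit_self _
          · exact MulAction.mem_orbit _ _
        · rintro ⟨u, rfl⟩
          rcases Int.units_eq_one_or u with rfl | rfl
          · simp
          · exact pc_neg e'
      disjoint := by
        intro e
        refine ⟨Metric.ball e (1/2), Metric.ball_mem_nhds _ (by norm_num), ?_⟩
        intro u hu
        rcases Int.units_eq_one_or u with rfl | rfl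
        · rfl
        · exfalso
          obtain ⟨_, ⟨x, hx, rfl⟩, hx'⟩ := hu
          rw [Metric.mem_ball] at hx hx'
          have h1 : dist ((-1 : ℤˣ) • x) x < 1 := by
            have := dist_triangle_right ((-1 : ℤˣ) • x) x e
            simp only at hx'
            linarith
          rw [Subtype.dist_eq, val_neg, dist_eq_norm] at h1
          have h2 : -(x : ℂ × ℂ) - x = (-2 : ℝ) • (x : ℂ × ℂ) := by module
          rw [h2, norm_smul, Prod.norm_def] at h1
          have h3 := x.2
          rw [mem_Sc, Complex.normSq_eq_norm_sq, Complex.normSq_eq_norm_sq] at h3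
          have h4 := le_max_left ‖(x : ℂ × ℂ).1‖ ‖(x : ℂ × ℂ).2‖
          have h5 := le_max_right ‖(x : ℂ × ℂ).1‖ ‖(x : ℂ × ℂ).2‖
          norm_num at h1
          nlinarith [norm_nonneg (x : ℂ × ℂ).1, norm_nonneg (x : ℂ × ℂ).2] }
  exact this.isCoveringMap

theorem lift1 {E F A : Type*} [TopologicalSpace E] [TopologicalSpace F] [TopologicalSpace A] {p : E → F}
    (hp : IsCoveringMap p) (H : C(I × A, F)) (f : C(A, E)) (h0 : ∀ a, H (0, a) = p (f a)) :
    ∃ G : C(I × A, E), (∀ x, p (G x) = H x) ∧ (∀ a, G (0, a) = f a) ∧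
      ∀ (n : E → E) (m : A → A), Continuous n → (∀ e, p (n e) = p e) → (∀ t a, H (t, m a) = H (t, a)) →
        (∀ a, f (m a) = n (f a)) → ∀ t a, G (t, m a) = n (G (t, a)) := by
  have hl := fun x => congrFun (hp.liftHomotopy_lifts H f h0) x
  have hz := hp.liftHomotopy_zero H f h0
  refine ⟨hp.liftHomotopy H f h0, hl, hz, ?_⟩
  intro n m hn hpn hH hf t a
  generalize hp.liftHomotopy H f h0 = G at hl hz
  simp only [Function.comp_apply] at hl
  refine congrFun (hp.eq_of_comp_eq (g₁ := fun t => G (t, m a)) (g₂ := fun t => n (G (t, a)))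
    (by fun_prop) (by fun_prop) ?_ (0 : I) ?_) t
  · funext t
    simp only [Function.comp_apply, hl, hpn, hH]
  · simp only [hz, hf]
end TCaux

namespace TCaux
open ComplexConjugate Topology
variable {l : ℕ}

abbrev M2 := Metric.sphere (0 : E3) 1
abbrev Xl (l : ℕ) := Metric.sphere (0 : Md l) 1

noncomputable def y0 : Fin (l+1) → ℝ := fun i => if i = 0 then 1 else 0
theorem hy0 : ∑ i, (y0 (l := l)) i ^ 2 = 1 := by simp [y0]

noncomputable def ph (l : ℕ) (r : M2) : Xl l :=
  ⟨Gm 0 1 r y0, (Sp_iff _).1 (Sp_Gm (by norm_num) (by norm_num) ((E3_iff _).1 r.2) hy0)⟩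
noncomputable def ka (r : M2) : Sc := ⟨(⟨0, (r : E3) 0⟩, wr r), by
  rw [mem_Sc, Complex.normSq_mk, ← (E3_iff _).1 r.2]; ring⟩

theorem wr_neg (r : E3) : wr (-r) = - wr r := by apply Complex.ext <;> simp [wr]
theorem ph_neg (r : M2) : ph l (-r) = ph l r := by
  apply Subtype.ext
  have : (⟨0, - (r : E3) 0⟩ : ℂ) = - ⟨0, (r : E3) 0⟩ := by apply Complex.ext <;> simp
  simp [ph, Gm, qr, Nr, Yr, wr_neg, this]
theorem ka_neg (r : M2) : ka (-r) = (-1 : ℤˣ) • ka r := by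
  apply Subtype.ext
  rw [val_neg]
  simp only [ka]
  ext1
  · apply Complex.ext <;> simp
  · simp [wr_neg]
theorem cont_ph : Continuous (ph l) := by
  apply Continuous.subtype_mk
  exact cont_Gm continuous_const continuous_const continuous_subtype_val (fun _ => zero_le_one) _
theorem cont_ka : Continuous ka := by
  apply Continuous.subtype_mk
  exact (cont_cmk continuous_const (by fun_prop)).prodMk (cont_wr.comp continuous_subtype_val)
theorem dl_ph (r : M2) : dl (ph l r : Md l) = 0 := dl_Gm (by norm_num) (by norm_num) hy0
theorem Tv_ph (r : M2) : Tv (ph l r : Md l) = pc (ka r) := by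
  simp only [ph, pc, ka]
  rw [Tv_Gm (by norm_num) (by norm_num) hy0]
  simp

theorem Tv_mem {v : Xl l} (h : dl (v : Md l) = 0) : Tv (v : Md l) ∈ Fb :=
  ⟨by rw [W_Tv, h, mul_zero], ns_Tv ((Sp_iff _).2 v.2)⟩

noncomputable def ip (e e' : Sc) : ℝ :=
  (conj (e : ℂ × ℂ).1 * (e' : ℂ × ℂ).1).re + (conj (e : ℂ × ℂ).2 * (e' : ℂ × ℂ).2).re
theorem ip_self (e : Sc) : ip e e = 1 := by
  have := e.2
  rw [mem_Sc] at this
  rw [← this, ip]; simp [Complex.normSq_apply]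
theorem ip_neg (e e' : Sc) : ip ((-1 : ℤˣ) • e) e' = - ip e e' := by
  simp only [ip, val_neg]; simp; ring
theorem ip_neg' (e e' : Sc) : ip e ((-1 : ℤˣ) • e') = - ip e e' := by
  simp only [ip, val_neg]; simp; ring

theorem sign_ex {G : Type*} [Nonempty G] (act : G → Xl l → Xl l)
    (hfix : ∀ v : Xl l, dl (v : Md l) = 0 ↔ ∀ g, act g v = v) (U : Set (Xl l × Xl l))
    (s₁ s₂ : Xl l × Xl l → C(I, Xl l)) (hs₁ : ContinuousOn s₁ U) (hs₂ : ContinuousOn s₂ U)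
    (hp : ∀ p ∈ U, s₁ p 0 = p.1 ∧ s₂ p 1 = p.2 ∧ PaperTC.orbit act (s₁ p 1) = PaperTC.orbit act (s₂ p 0))
    (he : ∀ g₁ g₂ : G, ∀ p, p ∈ U → ∀ t : I,
          s₁ (act g₁ p.1, act g₂ p.2) t = act g₁ (s₁ p t) ∧
          s₂ (act g₁ p.1, act g₂ p.2) t = act g₂ (s₂ p t)) :
    ∃ ε : {a : M2 × M2 // (ph l a.1, ph l a.2) ∈ U} → ℝ, Continuous ε ∧ (∀ a, ε a ≠ 0) ∧
      (∀ a b h h', ε ⟨(-a, b), h⟩ = - ε ⟨(a, b), h'⟩) ∧ (∀ a b h h', ε ⟨(a, -b), h⟩ = - ε ⟨(a, b), h'⟩) := by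
  let A := {a : M2 × M2 // (ph l a.1, ph l a.2) ∈ U}
  let P : A → Xl l × Xl l := fun a => (ph l a.1.1, ph l a.1.2)
  have hPc : Continuous P := by
    have := cont_ph (l := l)
    fun_prop
  have hPU : ∀ a, P a ∈ U := fun a => a.2
  have hPf : ∀ (a : A) g₁ g₂, (act g₁ (P a).1, act g₂ (P a).2) = P a := fun a g₁ g₂ => by
    rw [(hfix _).1 (dl_ph a.1.1) g₁, (hfix _).1 (dl_ph a.1.2) g₂]
  have d1 : ∀ (a : A) (t : I), dl (s₁ (P a) t : Md l) = 0 := fun a t => (hfix _).2 fun g => by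
    have := (he g g (P a) (hPU a) t).1
    rw [hPf] at this; exact this.symm
  have d2 : ∀ (a : A) (t : I), dl (s₂ (P a) t : Md l) = 0 := fun a t => (hfix _).2 fun g => by
    have := (he g g (P a) (hPU a) t).2
    rw [hPf] at this; exact this.symm
  have hmid : ∀ a : A, s₁ (P a) 1 = s₂ (P a) 0 := fun a => by
    have h1 := (hp (P a) (hPU a)).2.2
    obtain ⟨g⟩ := ‹Nonempty G›
    have h2 : s₂ (P a) 0 ∈ PaperTC.orbit act (s₂ (P a) 0) := ⟨g, (hfix _).1 (d2 a 0) g⟩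
    rw [← h1] at h2
    obtain ⟨g', hg'⟩ := h2
    rw [(hfix _).1 (d1 a 1) g'] at hg'
    exact hg'
  have c1 : Continuous fun a : A => s₁ (P a) := hs₁.comp_continuous hPc hPU
  have c2 : Continuous fun a : A => s₂ (P a) := hs₂.comp_continuous hPc hPU
  let H1 : C(I × A, Fb) := ⟨fun x => ⟨Tv (s₁ (P x.2) x.1 : Md l), Tv_mem (d1 x.2 x.1)⟩, by
    apply Continuous.subtype_mk
    refine cont_Tv.comp (continuous_subtype_val.comp ?_)
    exact (c1.comp continuous_snd).eval continuous_fst⟩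
  let H2 : C(I × A, Fb) := ⟨fun x => ⟨Tv (s₂ (P x.2) x.1 : Md l), Tv_mem (d2 x.2 x.1)⟩, by
    apply Continuous.subtype_mk
    refine cont_Tv.comp (continuous_subtype_val.comp ?_)
    exact (c2.comp continuous_snd).eval continuous_fst⟩
  let f1 : C(A, Sc) := ⟨fun a => ka a.1.1, cont_ka.comp (by fun_prop)⟩
  obtain ⟨G1, hG1, hG1z, hG1m⟩ := lift1 pc_cov H1 f1 (fun a => by
    apply Subtype.ext
    change Tv (s₁ (P a) 0 : Md l) = pc (ka a.1.1)
    rw [(hp (P a) (hPU a)).1, ← Tv_ph (l := l)])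
  let f2 : C(A, Sc) := ⟨fun a => G1 (1, a), by fun_prop⟩
  obtain ⟨G2, hG2, hG2z, hG2m⟩ := lift1 pc_cov H2 f2 (fun a => by
    change _ = pc (G1 (1, a))
    rw [hG1]
    apply Subtype.ext
    change Tv (s₂ (P a) 0 : Md l) = Tv (s₁ (P a) 1 : Md l)
    rw [hmid])
  have hend : ∀ a : A, pc (G2 (1, a)) = pc (ka a.1.2) := fun a => by
    rw [hG2]
    apply Subtype.ext
    change Tv (s₂ (P a) 1 : Md l) = _
    rw [(hp (P a) (hPU a)).2.1, ← Tv_ph (l := l)]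
  have hPn1 : ∀ (m : A → A) (a : A), P (m a) = P a → ∀ t, H1 (t, m a) = H1 (t, a) := by
    intro m a h t
    apply Subtype.ext
    change Tv (s₁ (P (m a)) t : Md l) = Tv (s₁ (P a) t : Md l)
    rw [h]
  have hPn2 : ∀ (m : A → A) (a : A), P (m a) = P a → ∀ t, H2 (t, m a) = H2 (t, a) := by
    intro m a h t
    apply Subtype.ext
    change Tv (s₂ (P (m a)) t : Md l) = Tv (s₂ (P a) t : Md l)
    rw [h]
  let m1 : A → A := fun a => ⟨(-a.1.1, a.1.2), by simp only [ph_neg]; exact a.2⟩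
  let m2 : A → A := fun a => ⟨(a.1.1, -a.1.2), by simp only [ph_neg]; exact a.2⟩
  have hm1 : ∀ a, P (m1 a) = P a := fun a => by simp only [P, m1, ph_neg]
  have hm2 : ∀ a, P (m2 a) = P a := fun a => by simp only [P, m2, ph_neg]
  have e1 : ∀ t a, G1 (t, m1 a) = (-1 : ℤˣ) • G1 (t, a) :=
    hG1m (fun e => (-1 : ℤˣ) • e) m1 cont_neg pc_neg (fun t a => hPn1 m1 a (hm1 a) t) (fun a => ka_neg _)
  have e2 : ∀ t a, G2 (t, m1 a) = (-1 : ℤˣ) • G2 (t, a) :=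
    hG2m (fun e => (-1 : ℤˣ) • e) m1 cont_neg pc_neg (fun t a => hPn2 m1 a (hm1 a) t) (fun a => e1 1 a)
  have e1' : ∀ t a, G1 (t, m2 a) = G1 (t, a) :=
    hG1m (fun e => e) m2 continuous_id (fun _ => rfl) (fun t a => hPn1 m2 a (hm2 a) t) (fun a => rfl)
  have e2' : ∀ t a, G2 (t, m2 a) = G2 (t, a) :=
    hG2m (fun e => e) m2 continuous_id (fun _ => rfl) (fun t a => hPn2 m2 a (hm2 a) t) (fun a => e1' 1 a)
  refine ⟨fun a => ip (G2 (1, a)) (ka a.1.2), ?_, ?_, ?_, ?_⟩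
  · have h1 : Continuous fun a : A => ((G2 (1, a) : Sc) : ℂ × ℂ) := by fun_prop
    have h2 : Continuous fun a : A => ((ka a.1.2 : Sc) : ℂ × ℂ) :=
      continuous_subtype_val.comp (cont_ka.comp (by fun_prop))
    unfold ip
    have hc := Complex.continuous_conj
    exact (Complex.continuous_re.comp ((hc.comp h1.fst).mul h2.fst)).add
      (Complex.continuous_re.comp ((hc.comp h1.snd).mul h2.snd))
  · intro a
    simp only
    rcases pc_eq (hend a) with h | h
    · rw [h, ip_self]; norm_num
    · rw [h, ip_neg, ip_self]; norm_num
  · intro a b h h'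
    have := e2 1 ⟨(a, b), h'⟩
    simp only
    rw [← ip_neg, ← this]
  · intro a b h h'
    have := e2' 1 ⟨(a, b), h'⟩
    simp only
    rw [← this, ka_neg, ip_neg']
end TCaux

namespace TCaux
open ComplexConjugate Topology
variable {l : ℕ}

theorem no_three {k : ℕ} (hk : k ≤ 3) (f : Fin k → M2 × M2 → ℝ) (hf : ∀ i, Continuous (f i))
    (h1 : ∀ i a b, f i (-a, b) = - f i (a, b)) (h2 : ∀ i a b, f i (a, -b) = - f i (a, b))
    (hnz : ∀ x, ∃ i, f i x ≠ 0) : False := by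
  let mu : ℝ → M2 := fun t => ⟨!₂[Real.cos (Real.pi * t), Real.sin (Real.pi * t), 0], by
    rw [E3_iff]; simp [wr, Complex.normSq_mk, ← pow_two]⟩
  let nu' : ℝ × ℝ → M2 := fun s => ⟨!₂[Real.cos (Real.pi * s.1), Real.sin (Real.pi * s.1) * Real.cos (Real.pi * s.2),
      Real.sin (Real.pi * s.1) * Real.sin (Real.pi * s.2)], by
    rw [E3_iff]; simp [wr, Complex.normSq_mk]
    have e1 := Real.sin_sq_add_cos_sq (Real.pi * s.1)
    have e2 := Real.sin_sq_add_cos_sq (Real.pi * s.2)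
    linear_combination e1 + Real.sin (Real.pi * s.1) ^ 2 * e2⟩
  have hmu : Continuous mu := by
    apply Continuous.subtype_mk
    refine (PiLp.continuous_toLp 2 _).comp (continuous_pi fun i => ?_)
    fin_cases i <;> simp <;> fun_prop
  have hnu : Continuous nu' := by
    apply Continuous.subtype_mk
    refine (PiLp.continuous_toLp 2 _).comp (continuous_pi fun i => ?_)
    fin_cases i <;> simp <;> fun_prop
  have mu1 : mu 1 = - mu 0 := by
    apply Subtype.ext
    ext i
    fin_cases i <;> simp [mu]
  have nu1 : ∀ s, nu' (s, 1) = - nu' (1 - s, 0) := by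
    intro s
    apply Subtype.ext
    ext i
    fin_cases i <;> simp [nu', mul_sub]
  have nu0 : ∀ r, nu' (0, r) = nu' (0, 0) := by
    intro s
    apply Subtype.ext
    ext i
    fin_cases i <;> simp [nu']
  have nu2 : ∀ r, nu' (1, r) = nu' (1, 0) := by
    intro s
    apply Subtype.ext
    ext i
    fin_cases i <;> simp [nu']
  let F : ℝ × ℝ × ℝ → (Fin 3 → ℝ) := fun x j => if h : (j : ℕ) < k then f ⟨j, h⟩ (mu x.1, nu' x.2) else 0
  refine core F ?_ ?_ ?_ ?_ ?_ ?_
  · refine continuous_pi fun j => ?_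
    by_cases h : (j : ℕ) < k
    · simp only [F, h, dif_pos]
      exact (hf _).comp (by fun_prop)
    · simp only [F, h, dif_neg, not_false_eq_true]
      exact continuous_const
  · intro x hx
    obtain ⟨i, hi⟩ := hnz (mu x.1, nu' x.2)
    have := congrFun hx ⟨i, i.2.trans_le hk⟩
    simp [F] at this
    exact hi this
  · intro s r
    funext j
    by_cases h : (j : ℕ) < k
    · simp [F, h, mu1, h1]
    · simp [F, h]
  · intro t s
    funext j
    by_cases h : (j : ℕ) < k
    · simp [F, h, nu1, h2]
    · simp [F, h]
  · intro t r
    simp only [F, nu0 r]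
  · intro t r
    simp only [F, nu2 r]

theorem no_cover {G : Type*} [Nonempty G] (act : G → Xl l → Xl l)
    (hfix : ∀ v : Xl l, dl (v : Md l) = 0 ↔ ∀ g, act g v = v) {k : ℕ} (hk : k ≤ 3) : ¬ invTCcover act k := by
  rintro ⟨U, hU, hcov, hs⟩
  choose s₁ s₂ hs₁ hs₂ hp he using fun i => (hs i).2
  choose ε hε hε0 hε1 hε2 using fun i => sign_ex act hfix (U i) (s₁ i) (s₂ i) (hs₁ i) (hs₂ i) (hp i) (he i)
  obtain ⟨ρ, hρ⟩ := PartitionOfUnity.exists_isSubordinate (isClosed_univ (X := Xl l × Xl l)) U hU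
    (by rw [hcov])
  classical
  have hPc : Continuous fun a : M2 × M2 => (ph l a.1, ph l a.2) := by
    have := cont_ph (l := l)
    fun_prop
  let f : Fin k → M2 × M2 → ℝ := fun i a =>
    if h : (ph l a.1, ph l a.2) ∈ U i then ε i ⟨a, h⟩ * ρ i (ph l a.1, ph l a.2) else 0
  refine no_three hk f ?_ ?_ ?_ ?_
  · intro i
    rw [continuous_iff_continuousAt]
    intro a
    by_cases h : (ph l a.1, ph l a.2) ∈ U i
    · have hO : IsOpen {a : M2 × M2 | (ph l a.1, ph l a.2) ∈ U i} := (hU i).preimage hPc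
      have := hO.isOpenEmbedding_subtypeVal.continuousAt_iff (g := f i)
        (x := (⟨a, h⟩ : {a : M2 × M2 | (ph l a.1, ph l a.2) ∈ U i}))
      refine this.1 ?_
      have e : (f i ∘ Subtype.val) = fun a : {a : M2 × M2 | (ph l a.1, ph l a.2) ∈ U i} =>
          ε i a * ρ i (ph l a.1.1, ph l a.1.2) := by
        funext a
        exact dif_pos a.2
      rw [e]
      exact ((hε i).mul ((ρ i).continuous.comp (hPc.comp continuous_subtype_val))).continuousAt
    · have h' : (ph l a.1, ph l a.2) ∉ tsupport (ρ i) := fun h' => h (hρ i h')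
      have hO : IsOpen {a : M2 × M2 | (ph l a.1, ph l a.2) ∉ tsupport (ρ i)} :=
        (isClosed_tsupport (ρ i)).isOpen_compl.preimage hPc
      refine (continuousAt_const (y := (0 : ℝ))).congr ?_
      filter_upwards [hO.mem_nhds h'] with b hb
      simp only [f]
      split_ifs with hc
      · rw [image_eq_zero_of_notMem_tsupport hb, mul_zero]
      · rfl
  · intro i a b
    simp only [f, ph_neg]
    split_ifs with h
    · rw [hε1 i a b _ h]; ring
    · simp
  · intro i a b
    simp only [f, ph_neg]
    split_ifs with h
    · rw [hε2 i a b _ h]; ring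
    · simp
  · intro x
    obtain ⟨i, hi⟩ := ρ.exists_pos (mem_univ (ph l x.1, ph l x.2))
    have h : (ph l x.1, ph l x.2) ∈ U i := hρ i (subset_tsupport _ hi.ne')
    refine ⟨i, ?_⟩
    simp only [f, h, dif_pos]
    exact mul_ne_zero (hε0 i _) hi.ne'

theorem four_le {G : Type*} [Nonempty G] (act : G → Xl l → Xl l)
    (hfix : ∀ v : Xl l, dl (v : Md l) = 0 ↔ ∀ g, act g v = v) : 4 ≤ invTC act := by
  refine le_sInf ?_
  rintro _ ⟨m, rfl, -, hm⟩
  by_contra h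
  have : m ≤ 3 := by
    by_contra h3
    apply h
    exact_mod_cast (by omega : 4 ≤ m)
  exact no_cover act hfix this hm
end TCaux
open TCaux
/-- For every odd prime `p` and every `n ≥ 3` there is a smooth action of
`ℤ/p` on the standard sphere `S^{n+2}` whose fixed point set is non-empty and
path-connected, and whose invariant topological complexity is at least `4`. -/
theorem exists_smooth_zmod_sphere_invTC_ge_four (p : ℕ) (hp : p.Prime) (hp2 : p ≠ 2)
    (n : ℕ) (hn : 3 ≤ n) :
    ∃ act : ZMod p → ↥(Sph (n + 2)) → ↥(Sph (n + 2)),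
      (∀ x, act 0 x = x) ∧
      (∀ g h x, act (g + h) x = act g (act h x)) ∧
      (∀ g, ContMDiff (𝓡 (n + 2)) (𝓡 (n + 2)) (⊤ : ℕ∞) (act g)) ∧
      (fixedSet act).Nonempty ∧
      IsPathConnected (fixedSet act) ∧
      4 ≤ invTC act := by
  obtain ⟨l, rfl⟩ : ∃ l, n = l + 3 := ⟨n - 3, by omega⟩
  haveI : NeZero p := ⟨hp.ne_zero⟩
  obtain ⟨j, m, hj⟩ : ∃ j m : ℕ, 4 * j = p * m + 1 := by
    have hodd : p % 2 = 1 := hp.eq_two_or_odd.resolve_left hp2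
    rcases (by omega : p % 4 = 1 ∨ p % 4 = 3) with h | h
    · exact ⟨(p * 3 + 1) / 4, 3, by omega⟩
    · exact ⟨(p * 1 + 1) / 4, 1, by omega⟩
  let ζ : ZMod p → ℂ := fun k => ZMod.stdAddChar k
  have hζp : ∀ k, ζ k ^ p = 1 := fun k => by
    have h := AddChar.map_nsmul_eq_pow (ZMod.stdAddChar (N := p)) p k
    simp only [nsmul_eq_mul, CharP.cast_eq_zero, zero_mul, AddChar.map_zero_eq_one] at h
    exact h.symm
  have hζ : ∀ k, Adm j (ζ k) := fun k => by
    refine ⟨?_, ?_⟩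
    · have : ‖ζ k‖ = 1 := Complex.norm_eq_one_of_pow_eq_one (hζp k) hp.ne_zero
      rw [Complex.normSq_eq_norm_sq, this]; norm_num
    · rw [hj, pow_succ, pow_mul, hζp, one_pow, one_mul]
  have hζ0 : ζ 0 = 1 := AddChar.map_zero_eq_one _
  have hζa : ∀ g h, ζ (g + h) = ζ g * ζ h := fun g h => AddChar.map_add_eq_mul _ _ _
  have hζ1 : ζ 1 ≠ 1 := fun h => by
    haveI : Fact (1 < p) := ⟨hp.one_lt⟩
    have : (1 : ZMod p) = 0 := ZMod.injective_stdAddChar (by rw [AddChar.map_zero_eq_one]; exact h)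
    exact one_ne_zero this
  have hS : ∀ x : Xl l, Sp (x : Md l) := fun x => (Sp_iff _).2 x.2
  let act : ZMod p → Xl l → Xl l := fun k => actS j ζ hζ k
  have hfix : ∀ v : Xl l, dl (v : Md l) = 0 ↔ ∀ g, act g v = v := fun v => by
    constructor
    · intro h g
      exact Subtype.ext (Ps_fix' (hS v) h)
    · intro h
      exact Ps_fix (hζ 1) hζ1 (hS v) (congrArg Subtype.val (h 1))
  have hpc : IsPathConnected (fixedSet act) := by
    rw [Topology.IsInducing.subtypeVal.isPathConnected_iff]
    convert Fx_pc (l := l) using 1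
    ext v
    constructor
    · rintro ⟨v, hv, rfl⟩
      exact ⟨hS v, (hfix v).2 hv⟩
    · rintro ⟨h1, h2⟩
      exact ⟨⟨v, (Sp_iff _).1 h1⟩, (hfix _).1 h2, rfl⟩
  refine ⟨act, ?_, ?_, ?_, hpc.nonempty, hpc, four_le act hfix⟩
  · intro x
    apply Subtype.ext
    change Ps j (ζ 0) _ = _
    rw [hζ0]
    exact Ps_one j (hS x)
  · intro g h x
    apply Subtype.ext
    change Ps j (ζ (g + h)) _ = Ps j (ζ g) (Ps j (ζ h) _)
    rw [hζa]
    exact (Ps_Ps (hζ h) (hζ g) (hS x)).symm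
  · intro g
    exact actS_cd j ζ hζ g
end

section
/- Let G be a compact Hausdorff topological group acting continuously on a topological space X with X^G ≠ ∅. Then max{TC(X^G), TC(X/G)} ≤ TC^G(X), where X/G is the orbit space with the quotient topology. -/
open Set unitInterval

open PaperTC


theorem concat_aux {Z Y : Type*} [TopologicalSpace Z] [TopologicalSpace Y] (U : Set Z)
    (a b : Z → C(I, Y)) (ha : ContinuousOn a U) (hb : ContinuousOn b U)
    (hab : ∀ p ∈ U, a p 1 = b p 0) :
    ∃ c : Z → C(I, Y), ContinuousOn c U ∧ ∀ p ∈ U, c p 0 = a p 0 ∧ c p 1 = b p 1 := by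
  classical
  rw [continuousOn_iff_continuous_domRestrict] at ha hb
  have hA : Continuous fun q : U × I => a q.1 (Set.projIcc 0 1 zero_le_one (2 * (q.2 : ℝ))) := by
    have h1 : Continuous fun q : U × I =>
        (U.domRestrict a q.1, Set.projIcc (0 : ℝ) 1 zero_le_one (2 * (q.2 : ℝ))) :=
      (ha.comp continuous_fst).prodMk (continuous_projIcc.comp (by fun_prop))
    exact ContinuousEval.continuous_eval.comp h1
  have hB : Continuous fun q : U × I =>
      b q.1 (Set.projIcc 0 1 zero_le_one (2 * (q.2 : ℝ) - 1)) := by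
    have h1 : Continuous fun q : U × I =>
        (U.domRestrict b q.1, Set.projIcc (0 : ℝ) 1 zero_le_one (2 * (q.2 : ℝ) - 1)) :=
      (hb.comp continuous_fst).prodMk (continuous_projIcc.comp (by fun_prop))
    exact ContinuousEval.continuous_eval.comp h1
  have hF : Continuous fun q : U × I => if (q.2 : ℝ) ≤ 1 / 2 then
      a q.1 (Set.projIcc 0 1 zero_le_one (2 * (q.2 : ℝ))) else
      b q.1 (Set.projIcc 0 1 zero_le_one (2 * (q.2 : ℝ) - 1)) := by
    refine Continuous.if_le hA hB (by fun_prop) continuous_const ?_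
    intro q hq
    rw [hq]
    have e1 : Set.projIcc (0 : ℝ) 1 zero_le_one (2 * (1 / 2)) = 1 := by
      apply Set.projIcc_of_right_le; norm_num
    have e2 : Set.projIcc (0 : ℝ) 1 zero_le_one (2 * (1 / 2) - 1) = 0 := by
      apply Set.projIcc_of_le_left; norm_num
    rw [e1, e2]
    exact hab _ q.1.2
  let F : C(U × I, Y) := ⟨_, hF⟩
  refine ⟨fun p => if h : p ∈ U then F.curry ⟨p, h⟩ else a p, ?_, ?_⟩
  · rw [continuousOn_iff_continuous_domRestrict]
    convert F.curry.continuous using 1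
    ext1 p
    simp [Set.domRestrict]
  · intro p hp
    simp only [hp, dif_pos]
    constructor
    · change (if ((0 : I) : ℝ) ≤ 1 / 2 then
        a p (Set.projIcc 0 1 zero_le_one (2 * ((0 : I) : ℝ))) else
        b p (Set.projIcc 0 1 zero_le_one (2 * ((0 : I) : ℝ) - 1))) = _
      rw [if_pos (by norm_num)]
      congr 1
      apply Set.projIcc_of_le_left; norm_num
    · change (if ((1 : I) : ℝ) ≤ 1 / 2 then
        a p (Set.projIcc 0 1 zero_le_one (2 * ((1 : I) : ℝ))) else
        b p (Set.projIcc 0 1 zero_le_one (2 * ((1 : I) : ℝ) - 1))) = _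
      rw [if_neg (by norm_num)]
      congr 1
      apply Set.projIcc_of_right_le; norm_num

theorem lift_aux {Z X : Type*} [TopologicalSpace Z] [TopologicalSpace X] (A : Set X) (U : Set Z)
    (d : Z → A) (s : Z → C(I, X)) (hs : ContinuousOn s U) (hA : ∀ p ∈ U, ∀ t, s p t ∈ A) :
    ∃ c : Z → C(I, A), ContinuousOn c U ∧ ∀ p ∈ U, ∀ t, (c p t : X) = s p t := by
  classical
  refine ⟨fun p => if h : p ∈ U then ⟨fun t => ⟨s p t, hA p h t⟩, by fun_prop⟩
    else ContinuousMap.const _ (d p), ?_, ?_⟩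
  · rw [continuousOn_iff_continuous_domRestrict] at hs ⊢
    have hi : Topology.IsInducing fun f : C(I, A) =>
        (⟨Subtype.val, continuous_subtype_val⟩ : C(A, X)).comp f :=
      ContinuousMap.isInducing_postcomp _ Topology.IsInducing.subtypeVal
    rw [hi.continuous_iff]
    convert hs using 1
    ext p t
    simp [Set.domRestrict]
  · intro p hp t
    simp [hp]

theorem minCover_mono {P Q : ℕ → Prop} (h : ∀ k, P k → Q k) : minCover Q ≤ minCover P := by
  apply sInf_le_sInf
  rintro k ⟨m, rfl, hm, hP⟩
  exact ⟨m, rfl, hm, h m hP⟩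

/-- For a compact Hausdorff topological group `G` acting continuously on a
space `X` with `X^G ≠ ∅`, both the topological complexity of the fixed point set and that of
the orbit space bound the invariant topological complexity from below. -/
theorem max_TC_fixed_TC_orbit_le_invTC {G X : Type*} [Group G] [TopologicalSpace G]
    [IsTopologicalGroup G] [CompactSpace G] [T2Space G] [TopologicalSpace X]
    (act : G → X → X)
    (act_one : ∀ x, act 1 x = x)
    (act_mul : ∀ g h x, act (g * h) x = act g (act h x))
    (act_cont : Continuous fun p : G × X => act p.1 p.2)
    (hfix : (fixedSet act).Nonempty) :
    max (TC ↥(fixedSet act)) (TC (OrbitSpace act)) ≤ invTC act := by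
  refine max_le (minCover_mono ?_) (minCover_mono ?_)
  · rintro k ⟨U, hUo, hUc, hU⟩
    let j : fixedSet act × fixedSet act → X × X := fun p => (p.1, p.2)
    have hj : Continuous j := by fun_prop
    refine ⟨fun i => j ⁻¹' U i, fun i => (hUo i).preimage hj, ?_, fun i => ?_⟩
    · rw [← Set.preimage_iUnion, hUc, Set.preimage_univ]
    · obtain ⟨-, s₁, s₂, h₁, h₂, he, hq⟩ := hU i
      have hjf : ∀ g p, (act g (j p).1, act g (j p).2) = j p := fun g p => by
        simp only [j]
        rw [p.1.2 g, p.2.2 g]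
      obtain ⟨a, ha, ha'⟩ := lift_aux (fixedSet act) (j ⁻¹' U i) Prod.fst (s₁ ∘ j)
        (h₁.comp hj.continuousOn (Set.mapsTo_preimage _ _)) (fun p hp t g => by
          have := (hq g g (j p) hp t).1
          rw [hjf] at this
          exact this.symm)
      obtain ⟨b, hb, hb'⟩ := lift_aux (fixedSet act) (j ⁻¹' U i) Prod.fst (s₂ ∘ j)
        (h₂.comp hj.continuousOn (Set.mapsTo_preimage _ _)) (fun p hp t g => by
          have := (hq g g (j p) hp t).2
          rw [hjf] at this
          exact this.symm)
      obtain ⟨c, hc, hc'⟩ := concat_aux (j ⁻¹' U i) a b ha hb (fun p hp => by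
        have h3 := (he (j p) hp).2.2
        have h4 : s₂ (j p) 0 ∈ orbit act (s₁ (j p) 1) := by
          rw [h3]; exact ⟨1, act_one _⟩
        obtain ⟨g, hg⟩ := h4
        apply Subtype.ext
        rw [ha' p hp, hb' p hp]
        have h5 := (a p 1).2 g
        rw [ha' p hp] at h5
        exact h5.symm.trans hg)
      refine ⟨c, hc, fun p hp => ⟨?_, ?_⟩⟩
      · rw [(hc' p hp).1]
        exact Subtype.ext ((ha' p hp 0).trans (he (j p) hp).1)
      · rw [(hc' p hp).2]
        exact Subtype.ext ((hb' p hp 1).trans (he (j p) hp).2.1)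
  · rintro k ⟨U, hUo, hUc, hU⟩
    let q : X → OrbitSpace act := Quot.mk _
    have hqc : Continuous q := continuous_quot_mk
    have hqs : Function.Surjective q := Quot.mk_surjective
    have hqact : ∀ g x, q (act g x) = q x := fun g x => (Quot.sound ⟨g, rfl⟩).symm
    have hqe : ∀ x y, q x = q y → ∃ g, act g x = y := by
      intro x y h
      have h' := Quot.eqvGen_exact h
      clear h
      induction h' with
      | rel _ _ h => exact h
      | refl x => exact ⟨1, act_one x⟩
      | symm x y _ ih =>
        obtain ⟨g, rfl⟩ := ih
        exact ⟨g⁻¹, by rw [← act_mul, inv_mul_cancel, act_one]⟩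
      | trans x y z _ _ ih1 ih2 =>
        obtain ⟨g, rfl⟩ := ih1
        obtain ⟨h, rfl⟩ := ih2
        exact ⟨h * g, act_mul _ _ _⟩
    have hqo : IsOpenMap q := by
      intro W hW
      change IsOpen (q ⁻¹' (q '' W))
      have : q ⁻¹' (q '' W) = ⋃ g : G, (act g) ⁻¹' W := by
        ext x
        simp only [Set.mem_preimage, Set.mem_image, Set.mem_iUnion]
        constructor
        · rintro ⟨w, hw, h⟩
          obtain ⟨g, rfl⟩ := hqe x w h.symm
          exact ⟨g, hw⟩
        · rintro ⟨g, hg⟩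
          exact ⟨_, hg, hqact g x⟩
      rw [this]
      refine isOpen_iUnion fun g => hW.preimage ?_
      exact act_cont.comp (Continuous.prodMk_right g)
    let r : X × X → OrbitSpace act × OrbitSpace act := Prod.map q q
    have hro : IsOpenMap r := hqo.prodMap hqo
    have hrs : Function.Surjective r := hqs.prodMap hqs
    have hrc : Continuous r := hqc.prodMap hqc
    have hrq : Topology.IsQuotientMap r := hro.isQuotientMap hrc hrs
    have hre : ∀ p p', r p = r p' → ∃ g₁ g₂, (act g₁ p.1, act g₂ p.2) = p' := by
      rintro ⟨x, y⟩ ⟨x', y'⟩ h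
      obtain ⟨g₁, h1⟩ := hqe x x' (congrArg Prod.fst h)
      obtain ⟨g₂, h2⟩ := hqe y y' (congrArg Prod.snd h)
      exact ⟨g₁, g₂, by simp [h1, h2]⟩
    let qc : C(X, OrbitSpace act) := ⟨q, hqc⟩
    let o := Function.surjInv hrs
    have ho : ∀ v, r (o v) = v := Function.surjInv_eq hrs
    refine ⟨fun i => r '' U i, fun i => hro _ (hUo i), ?_, fun i => ?_⟩
    · rw [← Set.image_iUnion, hUc, Set.image_univ, hrs.range_eq]
    · obtain ⟨hinv, s₁, s₂, h₁, h₂, he, hq⟩ := hU i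
      have hpre : r ⁻¹' (r '' U i) = U i := by
        apply Set.Subset.antisymm _ (Set.subset_preimage_image _ _)
        rintro p ⟨p', hp', h⟩
        obtain ⟨g₁, g₂, rfl⟩ := hre _ _ h
        exact hinv g₁ g₂ p' hp'
      have hoU : ∀ v ∈ r '' U i, o v ∈ U i := by
        intro v hv
        rw [← hpre]
        simpa [ho] using hv
      have hd : ∀ s : X × X → C(I, X), ContinuousOn s (U i) →
          (∀ p ∈ U i, ∀ g₁ g₂ t, q (s (act g₁ p.1, act g₂ p.2) t) = q (s p t)) →
          ContinuousOn (fun v => qc.comp (s (o v))) (r '' U i) := by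
        intro s hs hse
        rw [hrq.continuousOn_isOpen_iff (hro _ (hUo i)), hpre]
        refine ((ContinuousMap.continuous_postcomp qc).comp_continuousOn hs).congr ?_
        intro p hp
        obtain ⟨g₁, g₂, h⟩ := hre p (o (r p)) (ho _).symm
        ext t
        change q (s (o (r p)) t) = q (s p t)
        rw [← h, hse p hp]
      obtain ⟨c, hc, hc'⟩ := concat_aux (r '' U i) _ _
        (hd s₁ h₁ fun p hp g₁ g₂ t => by rw [(hq g₁ g₂ p hp t).1, hqact])
        (hd s₂ h₂ fun p hp g₁ g₂ t => by rw [(hq g₁ g₂ p hp t).2, hqact])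
        (fun v hv => by
          have h3 := (he _ (hoU v hv)).2.2
          have h4 : s₂ (o v) 0 ∈ orbit act (s₁ (o v) 1) := by
            rw [h3]; exact ⟨1, act_one _⟩
          obtain ⟨g, hg⟩ := h4
          change q (s₁ (o v) 1) = q (s₂ (o v) 0)
          rw [← hg, hqact])
      refine ⟨c, hc, fun v hv => ⟨?_, ?_⟩⟩
      · rw [(hc' v hv).1]
        change q (s₁ (o v) 0) = _
        rw [(he _ (hoU v hv)).1]
        exact congrArg Prod.fst (ho v)
      · rw [(hc' v hv).2]
        change q (s₂ (o v) 1) = _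
        rw [(he _ (hoU v hv)).2.1]
        exact congrArg Prod.snd (ho v)
end
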